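/- In the antithetic Milstein setting, for every real p ≥ 2 there exists a constant K_p, depending only on p, T, f and g, such that for every N ≥ 1 (with Δt = T/N), E[ max_{0 ≤ n ≤ N} ‖X^f_n − X^a_n‖^p ] ≤ K_p · Δt^{p/2}. -/

import Mathlib

open MeasureTheory ProbabilityTheory

/-- `h_{ijk}(x) = ½ ∑_l g_{lj}(x) ∂g_{ik}/∂x_l (x)`. -/
noncomputable def milsteinH {d m : ℕ} (g : (Fin d → ℝ) → Fin d → Fin m → ℝ)
    (x : Fin d → ℝ) (i : Fin d) (j k : Fin m) : ℝ :=
  1 / 2 * ∑ l : Fin d, g x l j * fderiv ℝ (fun y => g y i k) x (Pi.single l 1)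

/-- One step of the Milstein scheme with the Lévy areas omitted:
`x_i ↦ x_i + f_i(x) dt + ∑_j g_{ij}(x) dw_j + ∑_{j,k} h_{ijk}(x)(dw_j dw_k − δ_{jk} dt)`. -/
noncomputable def milsteinStep {d m : ℕ} (f : (Fin d → ℝ) → Fin d → ℝ)
    (g : (Fin d → ℝ) → Fin d → Fin m → ℝ) (dt : ℝ)
    (x : Fin d → ℝ) (dw : Fin m → ℝ) : Fin d → ℝ :=
  fun i => x i + f x i * dt + (∑ j : Fin m, g x i j * dw j)
    + ∑ j : Fin m, ∑ k : Fin m,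
        milsteinH g x i j k * (dw j * dw k - if j = k then dt else 0)

/-!
Both fine paths are driven by unit-scale noise of mean zero, scaled by `s = √(Δt/2)`. Over a pair of
half steps the leading noise of a path at `x` is `s • g x (ξ + η)`, where `ξ` and `η` are the noises
of the two half steps. The sum `ξ + η` does not notice the swap, so on the even grid the difference
of the paths satisfies `D (n + 1) = D n + s² α n + s β n`, where `β n` is conditionally centred and
both `α n` and `β n` are bounded in `L^q` by a multiple of `‖D n‖ + s`: the difference itself comes
in through the Lipschitz bounds, and the `s` through the increments within the pair.

For even `q` the centring kills the first-order term in the Taylor expansion of the `q`-th moment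
of a coordinate of `D (n + 1)`, and a discrete Grönwall argument bounds `D` in `L^q` by a multiple
of `s` on the whole time interval. Doob's `L^q` inequality for the martingale part moves the maximum
over `n` inside, and monotonicity of the `L^p` norms gives every exponent `p ≤ q`.
-/

namespace AntitheticMilstein

theorem abs_add_pow_sub_sub_le (x y : ℝ) (n : ℕ) :
    |(x + y) ^ (n + 2) - x ^ (n + 2) - (n + 2) * x ^ (n + 1) * y|
      ≤ (n + 2) ^ 2 * y ^ 2 * (|x| + |y|) ^ n := by
  induction n with
  | zero =>
    have : (x + y) ^ 2 - x ^ 2 - 2 * x * y = y ^ 2 := by ring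
    simp only [zero_add, Nat.cast_zero, pow_one, pow_zero, this, abs_sq]
    linarith [sq_nonneg y]
  | succ n ih =>
    set R := (x + y) ^ (n + 2) - x ^ (n + 2) - (n + 2) * x ^ (n + 1) * y
    have expansion : (x + y) ^ (n + 1 + 2) - x ^ (n + 1 + 2)
        - ((n + 1 : ℕ) + 2) * x ^ (n + 1 + 1) * y
        = R * (x + y) + (n + 2) * x ^ (n + 1) * y ^ 2 := by
      simp only [R]; push_cast; ring
    calc _ ≤ |R| * |x + y| + (n + 2) * |x| ^ (n + 1) * y ^ 2 := by
          rw [expansion]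
          refine (abs_add_le _ _).trans_eq ?_
          rw [abs_mul, abs_mul, abs_mul, abs_pow, abs_sq,
            abs_of_nonneg (by positivity : (0 : ℝ) ≤ n + 2)]
      _ ≤ (n + 2) ^ 2 * y ^ 2 * (|x| + |y|) ^ n * (|x| + |y|)
            + (n + 2) * (|x| + |y|) ^ (n + 1) * y ^ 2 := by
          gcongr
          · exact abs_add_le x y
          · linarith [abs_nonneg y]
      _ = ((n + 2) ^ 2 + (n + 2)) * (y ^ 2 * (|x| + |y|) ^ (n + 1)) := by ring
      _ ≤ ((n + 1 : ℕ) + 2) ^ 2 * (y ^ 2 * (|x| + |y|) ^ (n + 1)) := by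
          gcongr; push_cast; nlinarith
      _ = _ := by ring

theorem abs_add_abs_add_abs_pow_le {n : ℕ} (hn : Even (n + 1)) (a b c : ℝ) :
    (|a| + |b| + |c|) ^ (n + 1) ≤ 3 ^ n * (a ^ (n + 1) + b ^ (n + 1) + c ^ (n + 1)) := by
  have h := pow_sum_div_card_le_sum_pow (s := Finset.univ) (f := ![|a|, |b|, |c|]) (n := n)
    (by simp [Fin.forall_fin_succ])
  rw [div_le_iff₀ (by simp)] at h
  simpa [Fin.sum_univ_three, mul_comm, hn.pow_abs] using h

theorem abs_sq_mul_add_mul_le {s S : ℝ} (hs : 0 ≤ s) (hsS : s ≤ S) (a b : ℝ) :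
    |s ^ 2 * a + s * b| ≤ s * ((1 + S) * (|a| + |b|)) := by
  calc |s ^ 2 * a + s * b| ≤ s * (s * |a| + |b|) := by
        refine (abs_add_le _ _).trans_eq ?_
        rw [abs_mul, abs_mul, abs_sq, abs_of_nonneg hs]; ring
    _ ≤ s * ((1 + S) * (|a| + |b|)) := by
        gcongr
        nlinarith [mul_le_mul_of_nonneg_right hsS (abs_nonneg a), abs_nonneg a,
          mul_nonneg (hs.trans hsS) (abs_nonneg b)]

theorem add_sq_mul_add_mul_pow_le_of_even {n : ℕ} (hn : Even (n + 2)) {s S : ℝ} (hs : 0 ≤ s)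
    (hsS : s ≤ S) (x a b : ℝ) :
    (x + (s ^ 2 * a + s * b)) ^ (n + 2) ≤ x ^ (n + 2) + (n + 2) * s * (x ^ (n + 1) * b)
      + 3 ^ (n + 1) * ((n + 2) + (n + 2) ^ 2 * (1 + S) ^ (2 * n + 2)) * s ^ 2
          * (x ^ (n + 2) + a ^ (n + 2) + b ^ (n + 2)) := by
  set u := |x| + |a| + |b|
  set y := s ^ 2 * a + s * b
  have hS : 0 ≤ S := hs.trans hsS
  have hu : |a| + |b| ≤ u := by simp only [u]; linarith [abs_nonneg x]
  have hy : |y| ≤ s * ((1 + S) * u) := (abs_sq_mul_add_mul_le hs hsS a b).trans (by gcongr)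
  have hxy : |x| + |y| ≤ (1 + S) ^ 2 * u := by
    calc |x| + |y| ≤ u + S * ((1 + S) * u) := by
          gcongr
          · simp only [u]; linarith [abs_nonneg a, abs_nonneg b]
          · exact hy.trans (by gcongr)
      _ ≤ (1 + S) ^ 2 * u := by nlinarith [mul_nonneg hS (by positivity : 0 ≤ u)]
  have drift : x ^ (n + 1) * a ≤ u ^ (n + 2) := by
    calc x ^ (n + 1) * a ≤ |x| ^ (n + 1) * |a| := by
          rw [← abs_pow, ← abs_mul]; exact le_abs_self _
      _ ≤ u ^ (n + 1) * u := by
          gcongr <;> simp only [u] <;> linarith [abs_nonneg a, abs_nonneg b, abs_nonneg x]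
      _ = u ^ (n + 2) := by ring
  calc (x + y) ^ (n + 2)
      ≤ x ^ (n + 2) + (n + 2) * x ^ (n + 1) * y + (n + 2) ^ 2 * |y| ^ 2 * (|x| + |y|) ^ n := by
        rw [sq_abs]; linarith [(abs_le.mp (abs_add_pow_sub_sub_le x y n)).2]
    _ = x ^ (n + 2) + (n + 2) * s * (x ^ (n + 1) * b) + (n + 2) * s ^ 2 * (x ^ (n + 1) * a)
          + (n + 2) ^ 2 * |y| ^ 2 * (|x| + |y|) ^ n := by simp only [y]; ring
    _ ≤ x ^ (n + 2) + (n + 2) * s * (x ^ (n + 1) * b) + (n + 2) * s ^ 2 * u ^ (n + 2)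
          + (n + 2) ^ 2 * (s * ((1 + S) * u)) ^ 2 * ((1 + S) ^ 2 * u) ^ n := by gcongr
    _ = x ^ (n + 2) + (n + 2) * s * (x ^ (n + 1) * b)
          + ((n + 2) + (n + 2) ^ 2 * (1 + S) ^ (2 * n + 2)) * s ^ 2 * u ^ (n + 2) := by
        generalize u = v, 1 + S = B; ring
    _ ≤ _ := by
        rw [mul_comm (3 ^ (n + 1)), mul_right_comm _ (3 ^ (n + 1)), mul_assoc _ (3 ^ (n + 1))]
        gcongr
        exact abs_add_abs_add_abs_pow_le hn x a b

theorem succ_mul_mul_pow_le {a b : ℝ} (ha : 0 ≤ a) (hb : 0 ≤ b) (n : ℕ) :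
    (n + 1) * (a * b ^ n) ≤ a ^ (n + 1) + n * b ^ (n + 1) := by
  induction n with
  | zero => simp
  | succ n ih =>
    have rearrangement : 0 ≤ (a ^ (n + 1) - b ^ (n + 1)) * (a - b) := by
      rcases le_total a b with h | h
      · exact mul_nonneg_of_nonpos_of_nonpos (sub_nonpos.2 (by gcongr)) (sub_nonpos.2 h)
      · exact mul_nonneg (sub_nonneg.2 (by gcongr)) (sub_nonneg.2 h)
    have := mul_le_mul_of_nonneg_right ih hb
    push_cast
    ring_nf at this rearrangement ⊢
    linarith

section Doob

theorem partialSups_pow_le {x : ℕ → ℝ} (hx : ∀ k, 0 ≤ x k) (n N : ℕ) :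
    n * partialSups x N ^ (n + 1)
        + (n + 1) * ∑ k ∈ Finset.range N, partialSups x k ^ n * (x (k + 1) - x k)
      ≤ (n + 1) * (x N * partialSups x N ^ n) := by
  induction N with
  | zero =>
    have := pow_nonneg (hx 0) (n + 1)
    simp only [partialSups_zero, Finset.range_zero, Finset.sum_empty, mul_zero, add_zero]
    linear_combination this
  | succ N ih =>
    have hM : 0 ≤ partialSups x N := (hx 0).trans (le_partialSups_of_le x N.zero_le)
    rw [Finset.sum_range_succ, partialSups_add_one]
    rcases le_total (x (N + 1)) (partialSups x N) with h | h
    · rw [sup_eq_left.2 h]; linarith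
    · rw [sup_eq_right.2 h]
      linear_combination ih + succ_mul_mul_pow_le (hx (N + 1)) hM n

theorem partialSups_pow_add_sum_le {x : ℕ → ℝ} (hx : ∀ k, 0 ≤ x k) {n : ℕ} (hn : n ≠ 0) (N : ℕ) :
    partialSups x N ^ (n + 1) + (n + 1) ^ 2 / n *
        ∑ k ∈ Finset.range N, partialSups x k ^ n * (x (k + 1) - x k)
      ≤ ((n + 1) / n * x N) ^ (n + 1) := by
  have hn' : (0 : ℝ) < n := by positivity
  have hM : 0 ≤ partialSups x N := (hx 0).trans (le_partialSups_of_le x N.zero_le)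
  have path := partialSups_pow_le hx n N
  have young := succ_mul_mul_pow_le (mul_nonneg (by positivity : 0 ≤ ((n + 1) / n : ℝ)) (hx N)) hM n
  refine le_of_mul_le_mul_left ?_ hn'
  field_simp at young ⊢
  linear_combination (n + 1) * path + young

variable {Ω E : Type*} {mΩ : MeasurableSpace Ω} {μ : Measure Ω} [NormedAddCommGroup E]

theorem lpNorm_pow_natCast {f : Ω → E} {q : ℕ} (hq : q ≠ 0) (hf : AEStronglyMeasurable f μ) :
    lpNorm f q μ ^ q = ∫ ω, ‖f ω‖ ^ q ∂μ := by
  rw [lpNorm_eq_integral_norm_rpow_toReal (by exact_mod_cast hq) (ENNReal.natCast_ne_top q) hf]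
  simp only [ENNReal.toReal_natCast, Real.rpow_natCast]
  exact Real.rpow_inv_natCast_pow (integral_nonneg fun ω => by positivity) hq

theorem integrable_pow_mul {f g : Ω → ℝ} {n : ℕ} (hf : MemLp f (n + 1 : ℕ) μ)
    (hg : MemLp g (n + 1 : ℕ) μ) : Integrable (fun ω => f ω ^ n * g ω) μ := by
  refine ((hg.integrable_norm_pow n.succ_ne_zero).add
    ((hf.integrable_norm_pow n.succ_ne_zero).const_mul (n : ℝ))).mono'
    ((hf.1.pow n).mul hg.1) (.of_forall fun ω => ?_)
  have young := succ_mul_mul_pow_le (norm_nonneg (g ω)) (norm_nonneg (f ω)) n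
  have : 0 ≤ ‖g ω‖ * ‖f ω‖ ^ n := by positivity
  simp only [norm_mul, norm_pow, Pi.add_apply]
  nlinarith [mul_nonneg (n.cast_nonneg : (0 : ℝ) ≤ n) this]

theorem memLp_partialSups {X : ℕ → Ω → ℝ} {p : ENNReal} (hX : ∀ k, MemLp (X k) p μ) (k : ℕ) :
    MemLp (partialSups X k) p μ := by
  induction k with
  | zero => simpa using hX 0
  | succ k ih => rw [partialSups_add_one]; exact ih.sup (hX (k + 1))

variable {𝓕 : Filtration ℕ mΩ}

theorem stronglyMeasurable_partialSups {X : ℕ → Ω → ℝ} (hX : StronglyAdapted 𝓕 X) (k : ℕ) :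
    StronglyMeasurable[𝓕 k] (partialSups X k) := by
  induction k with
  | zero => simpa using hX 0
  | succ k ih =>
    rw [partialSups_add_one]
    exact continuous_sup.comp_stronglyMeasurable
      ((ih.mono (𝓕.mono k.le_succ)).prodMk (hX (k + 1)))

theorem submartingale_norm_of_martingale [NormedSpace ℝ E] [CompleteSpace E] {X : ℕ → Ω → E}
    (hX : Martingale X 𝓕 μ) : Submartingale (fun k ω => ‖X k ω‖) 𝓕 μ := by
  refine ⟨fun k => (hX.1 k).norm, fun i j hij => ?_, fun k => (hX.integrable k).norm⟩
  filter_upwards [hX.2 i j hij, norm_condExp_le (m := 𝓕 i) (μ := μ) (f := X j)] with ω h h'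
  rwa [h] at h'

variable [IsFiniteMeasure μ]

theorem integral_mul_sub_nonneg_of_submartingale {X : ℕ → Ω → ℝ}
    (hX : Submartingale X 𝓕 μ) {k : ℕ} {Y : Ω → ℝ} (hY : StronglyMeasurable[𝓕 k] Y) (hY0 : 0 ≤ Y)
    (hYX : Integrable (fun ω => Y ω * (X (k + 1) ω - X k ω)) μ) :
    0 ≤ ∫ ω, Y ω * (X (k + 1) ω - X k ω) ∂μ := by
  rw [← integral_condExp (𝓕.le k)]
  refine integral_nonneg_of_ae ?_
  filter_upwards [condExp_mul_of_stronglyMeasurable_left hY hYX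
    ((hX.integrable (k + 1)).sub (hX.integrable k)), hX.condExp_sub_nonneg k.le_succ] with ω h h0
  exact (mul_nonneg (hY0 ω) h0).trans_eq h.symm

theorem lpNorm_partialSups_le_of_submartingale {X : ℕ → Ω → ℝ} (hX : Submartingale X 𝓕 μ)
    (hX0 : ∀ k, 0 ≤ X k) {n : ℕ} (hn : n ≠ 0) (hXp : ∀ k, MemLp (X k) (n + 1 : ℕ) μ) (N : ℕ) :
    lpNorm (partialSups X N) (n + 1 : ℕ) μ ≤ (n + 1) / n * lpNorm (X N) (n + 1 : ℕ) μ := by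
  have hM (k : ℕ) : 0 ≤ partialSups X k := (hX0 0).trans (le_partialSups_of_le X k.zero_le)
  have hMp := memLp_partialSups hXp
  have hXM (k : ℕ) : Integrable (fun ω => partialSups X k ω ^ n * (X (k + 1) ω - X k ω)) μ :=
    integrable_pow_mul (hMp k) ((hXp (k + 1)).sub (hXp k))
  have sum_nonneg :
      0 ≤ ∫ ω, ∑ k ∈ Finset.range N, partialSups X k ω ^ n * (X (k + 1) ω - X k ω) ∂μ := by
    rw [integral_finsetSum _ fun k _ => hXM k]
    exact Finset.sum_nonneg fun k _ => integral_mul_sub_nonneg_of_submartingale hX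
      ((stronglyMeasurable_partialSups hX.1 k).pow n) (fun ω => pow_nonneg (hM k ω) n) (hXM k)
  have integrable_norm_pow {Y : Ω → ℝ} (hY0 : 0 ≤ Y) (hYp : MemLp Y (n + 1 : ℕ) μ) :
      Integrable (fun ω => Y ω ^ (n + 1)) μ := by
    simpa only [Real.norm_of_nonneg (hY0 _)] using hYp.integrable_norm_pow n.succ_ne_zero
  have hXN := integrable_norm_pow (Y := fun ω => (n + 1) / n * X N ω)
    (fun ω => mul_nonneg (by positivity) (hX0 N ω)) ((hXp N).const_mul _)
  have hsum := (integrable_finsetSum (Finset.range N) fun k _ => hXM k).const_mul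
    ((n + 1) ^ 2 / n : ℝ)
  refine le_of_pow_le_pow_left₀ n.succ_ne_zero (mul_nonneg (by positivity) lpNorm_nonneg) ?_
  rw [mul_pow, lpNorm_pow_natCast n.succ_ne_zero (hMp N).1,
    lpNorm_pow_natCast n.succ_ne_zero (hXp N).1, ← integral_const_mul]
  simp only [Real.norm_of_nonneg (hM N _), Real.norm_of_nonneg (hX0 N _), ← mul_pow]
  calc ∫ ω, partialSups X N ω ^ (n + 1) ∂μ
      ≤ ∫ ω, partialSups X N ω ^ (n + 1) ∂μ + (n + 1) ^ 2 / n *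
          ∫ ω, ∑ k ∈ Finset.range N, partialSups X k ω ^ n * (X (k + 1) ω - X k ω) ∂μ :=
        le_add_of_nonneg_right (mul_nonneg (by positivity) sum_nonneg)
    _ ≤ ∫ ω, ((n + 1) / n * X N ω) ^ (n + 1) ∂μ := by
        rw [← integral_const_mul, ← integral_add (integrable_norm_pow (hM N) (hMp N)) hsum]
        refine integral_mono ((integrable_norm_pow (hM N) (hMp N)).add hsum) hXN fun ω => ?_
        simpa only [Pi.partialSups_apply] using
          partialSups_pow_add_sum_le (fun k => hX0 k ω) hn N

theorem lpNorm_partialSups_norm_le_of_martingale [NormedSpace ℝ E] [CompleteSpace E] {X : ℕ → Ω → E}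
    (hX : Martingale X 𝓕 μ) {n : ℕ} (hn : n ≠ 0) (hXp : ∀ k, MemLp (X k) (n + 1 : ℕ) μ) (N : ℕ) :
    lpNorm (partialSups (fun k ω => ‖X k ω‖) N) (n + 1 : ℕ) μ
      ≤ (n + 1) / n * lpNorm (X N) (n + 1 : ℕ) μ := by
  rw [← lpNorm_norm (hXp N).1]
  exact lpNorm_partialSups_le_of_submartingale (submartingale_norm_of_martingale hX)
    (fun k ω => norm_nonneg _) hn (fun k => (hXp k).norm) N
end Doob

section Innovation

/-- An `L^q` random vector `ξ` that is centred and independent of the past `m`. -/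
structure IsInnovation {Ω U : Type*} [NormedAddCommGroup U] [NormedSpace ℝ U] [MeasurableSpace U]
    (ξ : Ω → U) (q : ℕ) (m : MeasurableSpace Ω) {mΩ : MeasurableSpace Ω} (μ : Measure Ω) :
    Prop where
  measurable : Measurable ξ
  memLp : MemLp ξ q μ
  integral_eq_zero : ∫ ω, ξ ω ∂μ = 0
  indep : Indep (MeasurableSpace.comap ξ inferInstance) m μ

variable {Ω : Type*} {m mΩ : MeasurableSpace Ω} {μ : Measure Ω} {q : ℕ}

theorem memLp_mul_of_indepFun {f g : Ω → ℝ} (hq : q ≠ 0) (h : IndepFun f g μ)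
    (hf : MemLp f q μ) (hg : MemLp g q μ) : MemLp (fun ω => f ω * g ω) q μ := by
  have hfg := (h.comp (measurable_norm.pow_const q) (measurable_norm.pow_const q)).integrable_mul
    (hf.integrable_norm_pow hq) (hg.integrable_norm_pow hq)
  refine (integrable_norm_rpow_iff (hf.1.mul hg.1) (by exact_mod_cast hq)
    (ENNReal.natCast_ne_top q)).1 ?_
  exact hfg.congr (.of_forall fun ω => by simp [mul_pow])

theorem lpNorm_mul_of_indepFun {f g : Ω → ℝ} (hq : q ≠ 0) (h : IndepFun f g μ)
    (hf : AEStronglyMeasurable f μ) (hg : AEStronglyMeasurable g μ) :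
    lpNorm (fun ω => f ω * g ω) q μ = lpNorm f q μ * lpNorm g q μ := by
  rw [← pow_left_inj₀ lpNorm_nonneg (mul_nonneg lpNorm_nonneg lpNorm_nonneg) hq, mul_pow,
    lpNorm_pow_natCast hq (f := fun ω => f ω * g ω) (hf.mul hg), lpNorm_pow_natCast hq hf,
    lpNorm_pow_natCast hq hg]
  simp only [norm_mul, mul_pow]
  exact (h.comp (measurable_norm.pow_const q)
    (measurable_norm.pow_const q)).integral_mul_eq_mul_integral (hf.norm.pow q) (hg.norm.pow q)

variable {U E : Type*} [NormedAddCommGroup U] [NormedSpace ℝ U] [MeasurableSpace U] [BorelSpace U]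
  [NormedAddCommGroup E] [NormedSpace ℝ E]

namespace IsInnovation
variable {ξ : Ω → U} {A : Ω → U →L[ℝ] E}

theorem indepFun_norm (hξ : IsInnovation ξ q m μ) (hA : StronglyMeasurable[m] A) :
    IndepFun (fun ω => ‖A ω‖) (fun ω => ‖ξ ω‖) μ := by
  refine (indep_of_indep_of_le_left
    (indep_of_indep_of_le_right hξ.indep hA.norm.measurable.comap_le) ?_).symm
  rw [show (fun ω => ‖ξ ω‖) = norm ∘ ξ from rfl, ← MeasurableSpace.comap_comp]
  exact MeasurableSpace.comap_mono measurable_norm.comap_le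

theorem memLp_apply (hξ : IsInnovation ξ q m μ) (hq : q ≠ 0)
    (hA : StronglyMeasurable[m] A) (hAq : MemLp A q μ) : MemLp (fun ω => A ω (ξ ω)) q μ :=
  (memLp_mul_of_indepFun hq (hξ.indepFun_norm hA) hAq.norm hξ.memLp.norm).mono
    (isBoundedBilinearMap_apply.continuous.comp_aestronglyMeasurable (hAq.1.prodMk hξ.memLp.1))
    (.of_forall fun ω => by simpa using (A ω).le_opNorm (ξ ω))

theorem lpNorm_apply_le (hξ : IsInnovation ξ q m μ) (hq : q ≠ 0) (hA : StronglyMeasurable[m] A)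
    (hAq : MemLp A q μ) :
    lpNorm (fun ω => A ω (ξ ω)) q μ ≤ lpNorm A q μ * lpNorm ξ q μ := by
  have h := hξ.indepFun_norm hA
  rw [← lpNorm_norm hAq.1, ← lpNorm_norm hξ.memLp.1,
    ← lpNorm_mul_of_indepFun hq h hAq.1.norm hξ.memLp.1.norm]
  exact lpNorm_mono_real (memLp_mul_of_indepFun hq h hAq.norm hξ.memLp.norm)
    fun ω => (A ω).le_opNorm (ξ ω)

theorem condExp_apply_eq_zero [SecondCountableTopology U] [CompleteSpace U] [CompleteSpace E]
    [IsFiniteMeasure μ] (hξ : IsInnovation ξ q m μ) (hq : q ≠ 0) (hm : m ≤ mΩ)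
    (hA : StronglyMeasurable[m] A) (hAq : MemLp A q μ) : μ[fun ω => A ω (ξ ω) | m] =ᵐ[μ] 0 := by
  have hq1 : (1 : ENNReal) ≤ q := by exact_mod_cast Nat.one_le_iff_ne_zero.2 hq
  have hξ0 : μ[ξ | m] =ᵐ[μ] fun _ => 0 := by
    rw [← hξ.integral_eq_zero]
    exact condExp_indep_eq hξ.measurable.comap_le hm
      (comap_measurable ξ).stronglyMeasurable hξ.indep
  refine (condExp_bilin_of_stronglyMeasurable_left (ContinuousLinearMap.id ℝ (U →L[ℝ] E)) hA
    ((hξ.memLp_apply hq hA hAq).integrable hq1) (hξ.memLp.integrable hq1)).trans ?_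
  filter_upwards [hξ0] with ω h
  simp [h]
end IsInnovation
end Innovation

section MartingaleIncrement

/-- An `L^q` random vector `β`, known at `m'`, which is conditionally centred given `m`. -/
structure IsMartingaleIncrement {Ω E : Type*} [NormedAddCommGroup E] [NormedSpace ℝ E]
    [CompleteSpace E] (β : Ω → E) (q : ℕ) (m m' : MeasurableSpace Ω) {mΩ : MeasurableSpace Ω}
    (μ : Measure Ω) : Prop where
  memLp : MemLp β q μ
  stronglyMeasurable : StronglyMeasurable[m'] β
  condExp_eq_zero : μ[β | m] =ᵐ[μ] 0

variable {Ω U E : Type*} [NormedAddCommGroup U] [NormedSpace ℝ U] [MeasurableSpace U]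
  [BorelSpace U] [SecondCountableTopology U] [CompleteSpace U]
  [NormedAddCommGroup E] [NormedSpace ℝ E] [CompleteSpace E]
  {m₀ m m' m₁ mΩ : MeasurableSpace Ω} {μ : Measure Ω} {q : ℕ} {β γ : Ω → E}

namespace IsMartingaleIncrement

theorem mono (hβ : IsMartingaleIncrement β q m m' μ) (hm₀ : m₀ ≤ m) (hm' : m' ≤ m₁) (hm : m ≤ mΩ)
    [SigmaFinite (μ.trim hm)] : IsMartingaleIncrement β q m₀ m₁ μ where
  memLp := hβ.memLp
  stronglyMeasurable := hβ.stronglyMeasurable.mono hm'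
  condExp_eq_zero :=
    (condExp_condExp_of_le hm₀ hm).symm.trans
      ((condExp_congr_ae hβ.condExp_eq_zero).trans (.of_eq condExp_zero))

theorem const_smul (hβ : IsMartingaleIncrement β q m m' μ) (c : ℝ) :
    IsMartingaleIncrement (fun ω => c • β ω) q m m' μ where
  memLp := hβ.memLp.const_smul c
  stronglyMeasurable := hβ.stronglyMeasurable.const_smul c
  condExp_eq_zero := (condExp_smul c β m).trans <| by
    filter_upwards [hβ.condExp_eq_zero] with ω h
    simp [h]

theorem add [IsFiniteMeasure μ] (hq : q ≠ 0) (hβ : IsMartingaleIncrement β q m m' μ)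
    (hγ : IsMartingaleIncrement γ q m m' μ) :
    IsMartingaleIncrement (fun ω => β ω + γ ω) q m m' μ where
  memLp := hβ.memLp.add hγ.memLp
  stronglyMeasurable := hβ.stronglyMeasurable.add hγ.stronglyMeasurable
  condExp_eq_zero := by
    have hq1 : (1 : ENNReal) ≤ q := by exact_mod_cast Nat.one_le_iff_ne_zero.2 hq
    refine (condExp_add (hβ.memLp.integrable hq1) (hγ.memLp.integrable hq1) m).trans ?_
    filter_upwards [hβ.condExp_eq_zero, hγ.condExp_eq_zero] with ω h h'
    simp [h, h']

theorem sub [IsFiniteMeasure μ] (hq : q ≠ 0) (hβ : IsMartingaleIncrement β q m m' μ)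
    (hγ : IsMartingaleIncrement γ q m m' μ) :
    IsMartingaleIncrement (fun ω => β ω - γ ω) q m m' μ := by
  simpa [sub_eq_add_neg] using hβ.add hq (hγ.const_smul (-1))

end IsMartingaleIncrement

theorem IsInnovation.isMartingaleIncrement_apply [IsFiniteMeasure μ] {ξ : Ω → U}
    {A : Ω → U →L[ℝ] E} (hξ : IsInnovation ξ q m μ) (hq : q ≠ 0) (hm : m ≤ mΩ) (hmm' : m ≤ m')
    (hξm : StronglyMeasurable[m'] ξ) (hA : StronglyMeasurable[m] A) (hAq : MemLp A q μ) :
    IsMartingaleIncrement (fun ω => A ω (ξ ω)) q m m' μ where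
  memLp := hξ.memLp_apply hq hA hAq
  stronglyMeasurable :=
    isBoundedBilinearMap_apply.continuous.comp_stronglyMeasurable ((hA.mono hmm').prodMk hξm)
  condExp_eq_zero := hξ.condExp_apply_eq_zero hq hm hA hAq

theorem martingale_sum_range [IsFiniteMeasure μ] {𝓕 : Filtration ℕ mΩ} {β : ℕ → Ω → E}
    (hq : q ≠ 0) (hβ : ∀ k, IsMartingaleIncrement (β k) q (𝓕 k) (𝓕 (k + 1)) μ) :
    Martingale (fun k => ∑ j ∈ Finset.range k, β j) 𝓕 μ := by
  refine martingale_of_condExp_sub_eq_zero_nat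
    (fun k => Finset.stronglyMeasurable_sum _ fun j hj =>
      (hβ j).stronglyMeasurable.mono (𝓕.mono (Finset.mem_range.1 hj)))
    (fun k => integrable_finsetSum' _ fun j _ => (hβ j).memLp.integrable
      (by exact_mod_cast Nat.one_le_iff_ne_zero.2 hq)) fun k => ?_
  simpa only [Finset.sum_range_succ, add_sub_cancel_left] using (hβ k).condExp_eq_zero

end MartingaleIncrement

section DriftNoise

variable {Ω : Type*} {m mΩ : MeasurableSpace Ω} {μ : Measure Ω}

theorem integral_pow_mul_eq_zero [IsFiniteMeasure μ] {x b : Ω → ℝ} {n : ℕ} (hm : m ≤ mΩ)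
    (hx : StronglyMeasurable[m] x) (hxq : MemLp x (n + 1 : ℕ) μ) (hbq : MemLp b (n + 1 : ℕ) μ)
    (hb : μ[b | m] =ᵐ[μ] 0) : ∫ ω, x ω ^ n * b ω ∂μ = 0 := by
  rw [← integral_condExp hm]
  refine integral_eq_zero_of_ae ?_
  filter_upwards [condExp_mul_of_stronglyMeasurable_left (hx.pow n) (integrable_pow_mul hxq hbq)
    (hbq.integrable (by norm_cast; omega)), hb] with ω h h0
  exact h.trans (by simp [h0])

theorem lpNorm_add_drift_add_noise_pow_le [IsFiniteMeasure μ] {x a b : Ω → ℝ} {n : ℕ}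
    (hn : Even (n + 2)) {s S : ℝ} (hs : 0 ≤ s) (hsS : s ≤ S) (hm : m ≤ mΩ)
    (hx : StronglyMeasurable[m] x) (hxq : MemLp x (n + 2 : ℕ) μ) (haq : MemLp a (n + 2 : ℕ) μ)
    (hbq : MemLp b (n + 2 : ℕ) μ) (hb : μ[b | m] =ᵐ[μ] 0) :
    lpNorm (fun ω => x ω + (s ^ 2 * a ω + s * b ω)) (n + 2 : ℕ) μ ^ (n + 2)
      ≤ lpNorm x (n + 2 : ℕ) μ ^ (n + 2)
        + 3 ^ (n + 1) * ((n + 2) + (n + 2) ^ 2 * (1 + S) ^ (2 * n + 2)) * s ^ 2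
          * (lpNorm x (n + 2 : ℕ) μ ^ (n + 2) + lpNorm a (n + 2 : ℕ) μ ^ (n + 2)
            + lpNorm b (n + 2 : ℕ) μ ^ (n + 2)) := by
  have hq : n + 2 ≠ 0 := by omega
  have integral_pow {y : Ω → ℝ} (hy : MemLp y (n + 2 : ℕ) μ) :
      lpNorm y (n + 2 : ℕ) μ ^ (n + 2) = ∫ ω, y ω ^ (n + 2) ∂μ := by
    simp only [lpNorm_pow_natCast hq hy.1, Real.norm_eq_abs, hn.pow_abs]
  have integrable_pow {y : Ω → ℝ} (hy : MemLp y (n + 2 : ℕ) μ) :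
      Integrable (fun ω => y ω ^ (n + 2)) μ := by
    simpa only [Real.norm_eq_abs, hn.pow_abs] using hy.integrable_norm_pow hq
  have hy : MemLp (fun ω => x ω + (s ^ 2 * a ω + s * b ω)) (n + 2 : ℕ) μ :=
    hxq.add ((haq.const_mul _).add (hbq.const_mul _))
  have hxb : Integrable (fun ω => (n + 2) * s * (x ω ^ (n + 1) * b ω)) μ :=
    (integrable_pow_mul hxq hbq).const_mul _
  have hxa : Integrable (fun ω => x ω ^ (n + 2) + a ω ^ (n + 2)) μ :=
    (integrable_pow hxq).add (integrable_pow haq)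
  have hxxb : Integrable (fun ω => x ω ^ (n + 2) + (n + 2) * s * (x ω ^ (n + 1) * b ω)) μ :=
    (integrable_pow hxq).add hxb
  have hxab : Integrable (fun ω => x ω ^ (n + 2) + a ω ^ (n + 2) + b ω ^ (n + 2)) μ :=
    hxa.add (integrable_pow hbq)
  rw [integral_pow hy, integral_pow hxq, integral_pow haq, integral_pow hbq]
  set C : ℝ := 3 ^ (n + 1) * ((n + 2) + (n + 2) ^ 2 * (1 + S) ^ (2 * n + 2))
  calc ∫ ω, (x ω + (s ^ 2 * a ω + s * b ω)) ^ (n + 2) ∂μ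
      ≤ ∫ ω, x ω ^ (n + 2) + (n + 2) * s * (x ω ^ (n + 1) * b ω)
          + C * s ^ 2 * (x ω ^ (n + 2) + a ω ^ (n + 2) + b ω ^ (n + 2)) ∂μ :=
        integral_mono (integrable_pow hy) (hxxb.add (hxab.const_mul _))
          fun ω => add_sq_mul_add_mul_pow_le_of_even hn hs hsS (x ω) (a ω) (b ω)
    _ = _ := by
        rw [integral_add hxxb (hxab.const_mul _), integral_add (integrable_pow hxq) hxb,
          integral_const_mul, integral_const_mul, integral_pow_mul_eq_zero hm hx hxq hbq hb,
          integral_add hxa (integrable_pow hbq), integral_add (integrable_pow hxq)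
          (integrable_pow haq), mul_zero, add_zero]

variable {ι : Type*} [Fintype ι]

theorem lpNorm_eval_le {f : Ω → ι → ℝ} {p : ENNReal} (hf : MemLp f p μ) (i : ι) :
    lpNorm (fun ω => f ω i) p μ ≤ lpNorm f p μ := by
  rw [← lpNorm_norm hf.1]
  exact lpNorm_mono_real hf.norm fun ω => norm_le_pi_norm (f ω) i

theorem norm_pow_le_sum (x : ι → ℝ) {q : ℕ} (hq : q ≠ 0) : ‖x‖ ^ q ≤ ∑ i, ‖x i‖ ^ q := by
  rcases isEmpty_or_nonempty ι with h | h
  · simp [Subsingleton.elim x 0, hq]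
  · obtain ⟨i, hi⟩ := Finite.exists_max fun i => ‖x i‖
    calc ‖x‖ ^ q ≤ ‖x i‖ ^ q := by gcongr; exact (pi_norm_le_iff_of_nonneg (norm_nonneg _)).2 hi
      _ ≤ ∑ i, ‖x i‖ ^ q :=
        Finset.single_le_sum (f := fun i => ‖x i‖ ^ q) (fun i _ => by positivity)
          (Finset.mem_univ i)

theorem lpNorm_pow_le_sum {f : Ω → ι → ℝ} {q : ℕ} (hq : q ≠ 0) (hf : MemLp f q μ) :
    lpNorm f q μ ^ q ≤ ∑ i, lpNorm (fun ω => f ω i) q μ ^ q := by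
  have hfi (i : ι) : MemLp (fun ω => f ω i) q μ := hf.eval i
  simp only [lpNorm_pow_natCast hq hf.1, fun i => lpNorm_pow_natCast hq (hfi i).1]
  rw [← integral_finsetSum _ fun i _ => (hfi i).integrable_norm_pow hq]
  exact integral_mono (hf.integrable_norm_pow hq)
    (integrable_finsetSum _ fun i _ => (hfi i).integrable_norm_pow hq)
    fun ω => norm_pow_le_sum (f ω) hq

theorem condExp_eval_eq_zero {f : Ω → ι → ℝ} (hf : Integrable f μ) (h : μ[f | m] =ᵐ[μ] 0) (i : ι) :
    μ[fun ω => f ω i | m] =ᵐ[μ] 0 := by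
  filter_upwards [(ContinuousLinearMap.proj (R := ℝ) (φ := fun _ : ι => ℝ) i).comp_condExp_comm
    hf (m := m), h] with ω hi h0
  exact hi.symm.trans (by simp [h0])

end DriftNoise

/-! ### Recursions with a small drift and a centred noise -/

section Recursion

variable {Ω ι : Type*} [Fintype ι] {mΩ : MeasurableSpace Ω}

/-- A process in `ℝ^ι` advancing by `s² α n + s β n`, where the noise `β n` is conditionally centred
and, up to the horizon `N`, the drift `α n` and the noise are bounded in `L^q` by the size of the
process plus an offset `ε`. -/
structure IsDriftNoiseRecursion (D α β : ℕ → Ω → ι → ℝ) (s κ ε : ℝ) (q N : ℕ)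
    (𝓕 : Filtration ℕ mΩ) (μ : Measure Ω) : Prop where
  adapted : StronglyAdapted 𝓕 D
  memLp : ∀ k, MemLp (D k) q μ
  memLp_drift : ∀ k, MemLp (α k) q μ
  noise : ∀ k, IsMartingaleIncrement (β k) q (𝓕 k) (𝓕 (k + 1)) μ
  step : ∀ k ω, D (k + 1) ω = D k ω + (s ^ 2 • α k ω + s • β k ω)
  lpNorm_drift_le : ∀ k < N, lpNorm (α k) q μ ≤ κ * (lpNorm (D k) q μ + ε)
  lpNorm_noise_le : ∀ k < N, lpNorm (β k) q μ ≤ κ * (lpNorm (D k) q μ + ε)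

/-- The rate `c` for which the `(n+2)`-nd moments of a drift-noise recursion in `ℝ^d` with `s ≤ S`
grow at most by the factor `1 + c s²` per step. -/
noncomputable def momentRate (d n : ℕ) (S κ : ℝ) : ℝ :=
  3 ^ (n + 1) * ((n + 2) + (n + 2) ^ 2 * (1 + S) ^ (2 * n + 2)) * (1 + d * (2 * κ) ^ (n + 2))

theorem momentRate_nonneg (d n : ℕ) {S κ : ℝ} (hS : 0 ≤ S) (hκ : 0 ≤ κ) :
    0 ≤ momentRate d n S κ := by
  unfold momentRate
  positivity

theorem pow_le_of_le_mul_add {a κ R ε V : ℝ} {q : ℕ} (hq : q ≠ 0) (ha : 0 ≤ a) (hκ : 0 ≤ κ)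
    (hR : 0 ≤ R) (hε : 0 ≤ ε) (haR : a ≤ κ * (R + ε)) (hRV : R ^ q ≤ V) :
    2 * a ^ q ≤ (2 * κ) ^ q * (V + ε ^ q) := by
  obtain ⟨r, rfl⟩ := Nat.exists_eq_succ_of_ne_zero hq
  calc 2 * a ^ (r + 1) ≤ 2 * (κ * (R + ε)) ^ (r + 1) := by gcongr
    _ = 2 * κ ^ (r + 1) * (R + ε) ^ (r + 1) := by rw [mul_pow, mul_assoc]
    _ ≤ 2 * κ ^ (r + 1) * (2 ^ r * (R ^ (r + 1) + ε ^ (r + 1))) := by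
        gcongr
        exact add_pow_le hR hε _
    _ ≤ 2 * κ ^ (r + 1) * (2 ^ r * (V + ε ^ (r + 1))) := by gcongr
    _ = (2 * κ) ^ (r + 1) * (V + ε ^ (r + 1)) := by ring

theorem one_add_mul_sq_pow_le_exp {c s T : ℝ} (hc : 0 ≤ c) {k N : ℕ} (hk : k ≤ N)
    (hNT : N * s ^ 2 ≤ T) : (1 + c * s ^ 2) ^ k ≤ Real.exp (c * T) :=
  calc (1 + c * s ^ 2) ^ k ≤ Real.exp (c * s ^ 2) ^ k := by
        gcongr
        linarith [Real.add_one_le_exp (c * s ^ 2)]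
    _ = Real.exp (c * (k * s ^ 2)) := by
        rw [← Real.exp_nat_mul]
        ring_nf
    _ ≤ Real.exp (c * T) := by
        gcongr
        exact le_trans (by gcongr) hNT

namespace IsDriftNoiseRecursion

variable {D α β : ℕ → Ω → ι → ℝ} {s κ ε S T : ℝ} {n q N : ℕ} {𝓕 : Filtration ℕ mΩ} {μ : Measure Ω}

theorem sum_lpNorm_pow_succ_le [IsFiniteMeasure μ]
    (h : IsDriftNoiseRecursion D α β s κ ε (n + 2) N 𝓕 μ) (hn : Even (n + 2)) (hs : 0 ≤ s)
    (hsS : s ≤ S) (hκ : 0 ≤ κ) (hε : 0 ≤ ε) {k : ℕ} (hk : k < N) :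
    ∑ i, lpNorm (fun ω => D (k + 1) ω i) (n + 2 : ℕ) μ ^ (n + 2) + ε ^ (n + 2)
      ≤ (1 + momentRate (Fintype.card ι) n S κ * s ^ 2)
        * (∑ i, lpNorm (fun ω => D k ω i) (n + 2 : ℕ) μ ^ (n + 2) + ε ^ (n + 2)) := by
  have hq : n + 2 ≠ 0 := by omega
  have hq1 : (1 : ENNReal) ≤ (n + 2 : ℕ) := by norm_cast; omega
  have hS : 0 ≤ S := hs.trans hsS
  set V := ∑ i, lpNorm (fun ω => D k ω i) (n + 2 : ℕ) μ ^ (n + 2) with hV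
  set c : ℝ := 3 ^ (n + 1) * ((n + 2) + (n + 2) ^ 2 * (1 + S) ^ (2 * n + 2)) with hc
  have : 0 ≤ c := by positivity
  have hDV : lpNorm (D k) (n + 2 : ℕ) μ ^ (n + 2) ≤ V := lpNorm_pow_le_sum hq (h.memLp k)
  have coordinate (i : ι) : lpNorm (fun ω => D (k + 1) ω i) (n + 2 : ℕ) μ ^ (n + 2)
      ≤ lpNorm (fun ω => D k ω i) (n + 2 : ℕ) μ ^ (n + 2)
        + c * s ^ 2 * (lpNorm (fun ω => D k ω i) (n + 2 : ℕ) μ ^ (n + 2)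
          + (2 * κ) ^ (n + 2) * (V + ε ^ (n + 2))) := by
    have ha := pow_le_of_le_mul_add hq lpNorm_nonneg hκ lpNorm_nonneg hε
      ((lpNorm_eval_le (h.memLp_drift k) i).trans (h.lpNorm_drift_le k hk)) hDV
    have hb := pow_le_of_le_mul_add hq lpNorm_nonneg hκ lpNorm_nonneg hε
      ((lpNorm_eval_le (h.noise k).memLp i).trans (h.lpNorm_noise_le k hk)) hDV
    simp only [h.step, Pi.add_apply, Pi.smul_apply, smul_eq_mul]
    refine (lpNorm_add_drift_add_noise_pow_le hn hs hsS (𝓕.le k)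
      ((continuous_apply i).comp_stronglyMeasurable (h.adapted k)) ((h.memLp k).eval i)
      ((h.memLp_drift k).eval i) ((h.noise k).memLp.eval i)
      (condExp_eval_eq_zero ((h.noise k).memLp.integrable hq1)
        (h.noise k).condExp_eq_zero i)).trans ?_
    rw [← hc, add_assoc (lpNorm _ _ _ ^ _)]
    gcongr
    linarith
  have hVε : 0 ≤ c * s ^ 2 * ε ^ (n + 2) := by positivity
  calc _ ≤ ∑ i, (lpNorm (fun ω => D k ω i) (n + 2 : ℕ) μ ^ (n + 2)
        + c * s ^ 2 * (lpNorm (fun ω => D k ω i) (n + 2 : ℕ) μ ^ (n + 2)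
          + (2 * κ) ^ (n + 2) * (V + ε ^ (n + 2)))) + ε ^ (n + 2) := by
        gcongr with i
        exact coordinate i
    _ = V + c * s ^ 2 * (V + Fintype.card ι * ((2 * κ) ^ (n + 2) * (V + ε ^ (n + 2))))
          + ε ^ (n + 2) := by
        rw [Finset.sum_add_distrib, ← Finset.mul_sum, Finset.sum_add_distrib, ← hV,
          Finset.sum_const, Finset.card_univ, nsmul_eq_mul]
    _ ≤ (1 + momentRate (Fintype.card ι) n S κ * s ^ 2) * (V + ε ^ (n + 2)) := by
        rw [momentRate, ← hc]
        linarith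

theorem sum_lpNorm_pow_le [IsFiniteMeasure μ]
    (h : IsDriftNoiseRecursion D α β s κ ε (n + 2) N 𝓕 μ) (hn : Even (n + 2)) (hs : 0 ≤ s)
    (hsS : s ≤ S) (hκ : 0 ≤ κ) (hε : 0 ≤ ε) {k : ℕ} (hk : k ≤ N) :
    ∑ i, lpNorm (fun ω => D k ω i) (n + 2 : ℕ) μ ^ (n + 2) + ε ^ (n + 2)
      ≤ (1 + momentRate (Fintype.card ι) n S κ * s ^ 2) ^ k
        * (∑ i, lpNorm (fun ω => D 0 ω i) (n + 2 : ℕ) μ ^ (n + 2) + ε ^ (n + 2)) := by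
  have hc := momentRate_nonneg (Fintype.card ι) n (hs.trans hsS) hκ
  induction k with
  | zero => simp
  | succ k ih =>
    rw [pow_succ' (1 + _), mul_assoc]
    exact (h.sum_lpNorm_pow_succ_le hn hs hsS hκ hε hk).trans (by gcongr; exact ih (by omega))

end IsDriftNoiseRecursion

/-- The constant in the `L^{n+2}` bounds of a drift-noise recursion in `ℝ^d` over the time
interval `[0, T]`. -/
noncomputable def momentConst (d n : ℕ) (S κ T : ℝ) : ℝ :=
  (d + 1) * Real.exp (momentRate d n S κ * T)

theorem momentConst_nonneg (d n : ℕ) (S κ T : ℝ) : 0 ≤ momentConst d n S κ T := by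
  unfold momentConst
  positivity

theorem one_le_momentConst (d n : ℕ) {S κ T : ℝ} (hS : 0 ≤ S) (hκ : 0 ≤ κ) (hT : 0 ≤ T) :
    1 ≤ momentConst d n S κ T :=
  one_le_mul_of_one_le_of_one_le (by simp)
    (Real.one_le_exp (mul_nonneg (momentRate_nonneg d n hS hκ) hT))

namespace IsDriftNoiseRecursion

variable {D α β : ℕ → Ω → ι → ℝ} {s κ ε S T : ℝ} {n q N : ℕ} {𝓕 : Filtration ℕ mΩ} {μ : Measure Ω}

theorem lpNorm_le [IsFiniteMeasure μ]
    (h : IsDriftNoiseRecursion D α β s κ ε (n + 2) N 𝓕 μ) (hn : Even (n + 2)) (hs : 0 ≤ s)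
    (hsS : s ≤ S) (hκ : 0 ≤ κ) (hε : 0 ≤ ε) (hNT : N * s ^ 2 ≤ T) {k : ℕ} (hk : k ≤ N) :
    lpNorm (D k) (n + 2 : ℕ) μ
      ≤ momentConst (Fintype.card ι) n S κ T * (lpNorm (D 0) (n + 2 : ℕ) μ + ε) := by
  have hS : 0 ≤ S := hs.trans hsS
  have hT : 0 ≤ T := le_trans (by positivity) hNT
  have hq : n + 2 ≠ 0 := by omega
  have hR : 0 ≤ lpNorm (D 0) (n + 2 : ℕ) μ := lpNorm_nonneg
  have hc := momentRate_nonneg (Fintype.card ι) n hS hκ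
  have hC := one_le_momentConst (Fintype.card ι) n hS hκ hT
  refine le_of_pow_le_pow_left₀ hq (by positivity) ?_
  calc lpNorm (D k) (n + 2 : ℕ) μ ^ (n + 2)
      ≤ ∑ i, lpNorm (fun ω => D k ω i) (n + 2 : ℕ) μ ^ (n + 2) + ε ^ (n + 2) :=
        (lpNorm_pow_le_sum hq (h.memLp k)).trans (le_add_of_nonneg_right (by positivity))
    _ ≤ (1 + momentRate (Fintype.card ι) n S κ * s ^ 2) ^ k
        * (∑ i, lpNorm (fun ω => D 0 ω i) (n + 2 : ℕ) μ ^ (n + 2) + ε ^ (n + 2)) :=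
        h.sum_lpNorm_pow_le hn hs hsS hκ hε hk
    _ ≤ Real.exp (momentRate (Fintype.card ι) n S κ * T)
        * (∑ _i : ι, (lpNorm (D 0) (n + 2 : ℕ) μ + ε) ^ (n + 2)
          + (lpNorm (D 0) (n + 2 : ℕ) μ + ε) ^ (n + 2)) := by
        gcongr with i
        · exact add_nonneg (Finset.sum_nonneg fun i _ => pow_nonneg lpNorm_nonneg _)
            (by positivity)
        · exact one_add_mul_sq_pow_le_exp hc hk hNT
        · exact lpNorm_nonneg
        · exact (lpNorm_eval_le (h.memLp 0) i).trans (le_add_of_nonneg_right hε)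
        · exact le_add_of_nonneg_left hR
    _ = momentConst (Fintype.card ι) n S κ T * (lpNorm (D 0) (n + 2 : ℕ) μ + ε) ^ (n + 2) := by
        rw [Finset.sum_const, Finset.card_univ, nsmul_eq_mul, momentConst]
        ring
    _ ≤ (momentConst (Fintype.card ι) n S κ T * (lpNorm (D 0) (n + 2 : ℕ) μ + ε)) ^ (n + 2) := by
        rw [mul_pow]
        gcongr
        exact le_self_pow₀ hC hq

end IsDriftNoiseRecursion
end Recursion

section Maximal

variable {Ω : Type*} {mΩ : MeasurableSpace Ω} {𝓕 : Filtration ℕ mΩ} {μ : Measure Ω}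

theorem lpNorm_fun_const_smul {E : Type*} [NormedAddCommGroup E] [NormedSpace ℝ E] {c : ℝ}
    (hc : 0 ≤ c) (f : Ω → E) {p : ENNReal} :
    lpNorm (fun ω => c • f ω) p μ = c * lpNorm f p μ := by
  rw [show (fun ω => c • f ω) = c • f from rfl, lpNorm_const_smul, coe_nnnorm,
    Real.norm_of_nonneg hc]

theorem lpNorm_add_add_le {E : Type*} [NormedAddCommGroup E] {f g h : Ω → E} {p : ENNReal}
    (hf : MemLp f p μ) (hg : MemLp g p μ) (hp : 1 ≤ p) :
    lpNorm (fun ω => f ω + g ω + h ω) p μ ≤ lpNorm f p μ + lpNorm g p μ + lpNorm h p μ :=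
  (lpNorm_add_le (hf.add hg) hp).trans (by gcongr; exact lpNorm_add_le hf hp)

namespace IsDriftNoiseRecursion

variable {ι : Type*} [Fintype ι] {D α β : ℕ → Ω → ι → ℝ} {s κ ε S T : ℝ} {n q N : ℕ}

theorem eq_add_sum (h : IsDriftNoiseRecursion D α β s κ ε q N 𝓕 μ) (k : ℕ) (ω : Ω) :
    D k ω = D 0 ω + ∑ j ∈ Finset.range k, s ^ 2 • α j ω + (∑ j ∈ Finset.range k, s • β j) ω := by
  induction k with
  | zero => simp
  | succ k ih =>
    rw [h.step, ih, Finset.sum_range_succ, Finset.sum_range_succ, Pi.add_apply, Pi.smul_apply]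
    abel

theorem martingale_sum_noise [IsFiniteMeasure μ]
    (h : IsDriftNoiseRecursion D α β s κ ε q N 𝓕 μ) (hq : q ≠ 0) :
    Martingale (fun k => ∑ j ∈ Finset.range k, s • β j) 𝓕 μ :=
  martingale_sum_range hq fun k => (h.noise k).const_smul s

theorem memLp_sum_norm_drift (h : IsDriftNoiseRecursion D α β s κ ε q N 𝓕 μ) (k : ℕ) :
    MemLp (fun ω => ∑ j ∈ Finset.range k, ‖s ^ 2 • α j ω‖) q μ :=
  memLp_finsetSum _ fun j _ => ((h.memLp_drift j).const_smul (s ^ 2)).norm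

theorem lpNorm_sum_norm_drift_le [IsFiniteMeasure μ]
    (h : IsDriftNoiseRecursion D α β s κ ε (n + 2) N 𝓕 μ) (hn : Even (n + 2)) (hs : 0 ≤ s)
    (hsS : s ≤ S) (hκ : 0 ≤ κ) (hε : 0 ≤ ε) (hNT : N * s ^ 2 ≤ T) :
    lpNorm (fun ω => ∑ j ∈ Finset.range N, ‖s ^ 2 • α j ω‖) (n + 2 : ℕ) μ
      ≤ T * κ * (momentConst (Fintype.card ι) n S κ T + 1)
        * (lpNorm (D 0) (n + 2 : ℕ) μ + ε) := by
  set C := momentConst (Fintype.card ι) n S κ T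
  have hC0 : 0 ≤ C := momentConst_nonneg _ _ _ _ _
  set R := lpNorm (D 0) (n + 2 : ℕ) μ
  have hR0 : 0 ≤ R := lpNorm_nonneg
  have drift_le (j : ℕ) (hj : j ∈ Finset.range N) :
      lpNorm (fun ω => ‖s ^ 2 • α j ω‖) (n + 2 : ℕ) μ ≤ s ^ 2 * (κ * ((C + 1) * (R + ε))) := by
    have hj := Finset.mem_range.1 hj
    have hDj := h.lpNorm_le hn hs hsS hκ hε hNT hj.le
    rw [lpNorm_norm (f := fun ω => s ^ 2 • α j ω) ((h.memLp_drift j).1.const_smul (s ^ 2)),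
      lpNorm_fun_const_smul (sq_nonneg s)]
    gcongr
    refine (h.lpNorm_drift_le j hj).trans ?_
    gcongr
    linarith
  calc lpNorm (fun ω => ∑ j ∈ Finset.range N, ‖s ^ 2 • α j ω‖) (n + 2 : ℕ) μ
      ≤ ∑ j ∈ Finset.range N, lpNorm (fun ω => ‖s ^ 2 • α j ω‖) (n + 2 : ℕ) μ := by
        rw [← Finset.sum_fn]
        exact lpNorm_sum_le (fun j _ => ((h.memLp_drift j).const_smul (s ^ 2)).norm)
          (by norm_cast; omega)
    _ ≤ ∑ j ∈ Finset.range N, s ^ 2 * (κ * ((C + 1) * (R + ε))) := Finset.sum_le_sum drift_le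
    _ = (N * s ^ 2) * κ * (C + 1) * (R + ε) := by
        rw [Finset.sum_const, Finset.card_range, nsmul_eq_mul]
        ring
    _ ≤ T * κ * (C + 1) * (R + ε) := by gcongr

theorem norm_sum_noise_le (h : IsDriftNoiseRecursion D α β s κ ε q N 𝓕 μ) (k : ℕ) (ω : Ω) :
    ‖(∑ j ∈ Finset.range k, s • β j) ω‖
      ≤ ‖D k ω‖ + ‖D 0 ω‖ + ∑ j ∈ Finset.range k, ‖s ^ 2 • α j ω‖ := by
  have noise : (∑ j ∈ Finset.range k, s • β j) ω
      = D k ω - D 0 ω - ∑ j ∈ Finset.range k, s ^ 2 • α j ω := by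
    rw [h.eq_add_sum k]
    abel
  rw [noise]
  exact (norm_sub_le _ _).trans (add_le_add (norm_sub_le _ _) (norm_sum_le _ _))

theorem partialSups_norm_le (h : IsDriftNoiseRecursion D α β s κ ε q N 𝓕 μ) (k : ℕ) (ω : Ω) :
    partialSups (fun k ω => ‖D k ω‖) k ω
      ≤ ‖D 0 ω‖ + ∑ j ∈ Finset.range k, ‖s ^ 2 • α j ω‖
        + partialSups (fun k ω => ‖(∑ j ∈ Finset.range k, s • β j) ω‖) k ω := by
  rw [Pi.partialSups_apply, Pi.partialSups_apply]
  refine partialSups_le _ _ _ fun i hi => ?_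
  rw [h.eq_add_sum i]
  refine (norm_add_le _ _).trans (add_le_add ((norm_add_le _ _).trans ?_)
    (le_partialSups_of_le (fun i => ‖(∑ j ∈ Finset.range i, s • β j) ω‖) hi))
  gcongr
  exact (norm_sum_le _ _).trans (Finset.sum_le_sum_of_subset_of_nonneg
    (Finset.range_mono hi) fun _ _ _ => norm_nonneg _)

theorem memLp_sum_noise (h : IsDriftNoiseRecursion D α β s κ ε q N 𝓕 μ) (k : ℕ) :
    MemLp (∑ j ∈ Finset.range k, s • β j) q μ :=
  memLp_finsetSum' _ fun j _ => (h.noise j).memLp.const_smul s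

theorem lpNorm_sum_noise_le (h : IsDriftNoiseRecursion D α β s κ ε q N 𝓕 μ) (hq : q ≠ 0) (k : ℕ) :
    lpNorm (∑ j ∈ Finset.range k, s • β j) q μ
      ≤ lpNorm (D k) q μ + lpNorm (D 0) q μ
        + lpNorm (fun ω => ∑ j ∈ Finset.range k, ‖s ^ 2 • α j ω‖) q μ := by
  have hD (k : ℕ) : MemLp (fun ω => ‖D k ω‖) q μ := (h.memLp k).norm
  rw [← lpNorm_norm (h.memLp k).1, ← lpNorm_norm (h.memLp 0).1]
  exact (lpNorm_mono_real (((hD k).add (hD 0)).add (h.memLp_sum_norm_drift k))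
    (h.norm_sum_noise_le k)).trans
    (lpNorm_add_add_le (hD k) (hD 0) (by exact_mod_cast Nat.one_le_iff_ne_zero.2 hq))

theorem lpNorm_partialSups_norm_le_add (h : IsDriftNoiseRecursion D α β s κ ε q N 𝓕 μ)
    (hq : q ≠ 0) (k : ℕ) :
    lpNorm (partialSups (fun k ω => ‖D k ω‖) k) q μ
      ≤ lpNorm (D 0) q μ + lpNorm (fun ω => ∑ j ∈ Finset.range k, ‖s ^ 2 • α j ω‖) q μ
        + lpNorm (partialSups (fun k ω => ‖(∑ j ∈ Finset.range k, s • β j) ω‖) k) q μ := by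
  have hD : MemLp (fun ω => ‖D 0 ω‖) q μ := (h.memLp 0).norm
  have hA := h.memLp_sum_norm_drift k
  rw [← lpNorm_norm (h.memLp 0).1]
  refine (lpNorm_mono_real ((hD.add hA).add
    (memLp_partialSups (fun k => (h.memLp_sum_noise k).norm) k)) fun ω => ?_).trans
    (lpNorm_add_add_le hD hA (by exact_mod_cast Nat.one_le_iff_ne_zero.2 hq))
  rw [Real.norm_of_nonneg ((norm_nonneg _).trans (le_partialSups_of_le
    (fun k ω => ‖D k ω‖) k.zero_le ω))]
  exact h.partialSups_norm_le k ω

theorem lpNorm_partialSups_norm_le [IsFiniteMeasure μ]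
    (h : IsDriftNoiseRecursion D α β s κ ε (n + 2) N 𝓕 μ) (hn : Even (n + 2)) (hs : 0 ≤ s)
    (hsS : s ≤ S) (hκ : 0 ≤ κ) (hε : 0 ≤ ε) (hNT : N * s ^ 2 ≤ T) :
    lpNorm (partialSups (fun k ω => ‖D k ω‖) N) (n + 2 : ℕ) μ
      ≤ 3 * (1 + T * κ) * (momentConst (Fintype.card ι) n S κ T + 1)
        * (lpNorm (D 0) (n + 2 : ℕ) μ + ε) := by
  have hDN := h.lpNorm_le hn hs hsS hκ hε hNT le_rfl
  have hA := h.lpNorm_sum_norm_drift_le hn hs hsS hκ hε hNT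
  have hS := h.lpNorm_sum_noise_le (by omega) N
  have hsup := h.lpNorm_partialSups_norm_le_add (by omega) N
  have doob : lpNorm (partialSups (fun k ω => ‖(∑ j ∈ Finset.range k, s • β j) ω‖) N)
      (n + 2 : ℕ) μ ≤ 2 * lpNorm (∑ j ∈ Finset.range N, s • β j) (n + 2 : ℕ) μ := by
    refine (lpNorm_partialSups_norm_le_of_martingale (h.martingale_sum_noise (by omega))
      n.succ_ne_zero h.memLp_sum_noise N).trans (mul_le_mul_of_nonneg_right ?_ lpNorm_nonneg)
    rw [div_le_iff₀ (by positivity)]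
    push_cast
    linarith
  have hR : 0 ≤ lpNorm (D 0) (n + 2 : ℕ) μ := lpNorm_nonneg
  have hCR := mul_nonneg (momentConst_nonneg (Fintype.card ι) n S κ T) (add_nonneg hR hε)
  linarith

end IsDriftNoiseRecursion
end Maximal

/-! ### The Milstein scheme -/

section Growth

variable {Ω E F : Type*} [NormedAddCommGroup E] [NormedAddCommGroup F] {mΩ : MeasurableSpace Ω}
  {μ : Measure Ω} {X : Ω → E} {Y : Ω → F} {c : ℝ}

theorem lpNorm_le_mul_of_norm_le_mul {p : ENNReal} (hX : MemLp X p μ) (hc : 0 ≤ c)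
    (h : ∀ ω, ‖Y ω‖ ≤ c * ‖X ω‖) : lpNorm Y p μ ≤ c * lpNorm X p μ := by
  rw [← lpNorm_norm hX.1, ← lpNorm_fun_const_smul hc]
  exact lpNorm_mono_real (hX.norm.const_mul c) h

theorem memLp_of_norm_le_growth [IsFiniteMeasure μ] {p : ENNReal} (hX : MemLp X p μ)
    (hY : AEStronglyMeasurable Y μ) (h : ∀ ω, ‖Y ω‖ ≤ c * (1 + ‖X ω‖)) : MemLp Y p μ :=
  (((memLp_const (1 : ℝ)).add hX.norm).const_mul c).mono' hY (.of_forall h)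

theorem lpNorm_le_of_norm_le_growth [IsProbabilityMeasure μ] {q : ℕ} (hq : q ≠ 0)
    (hX : MemLp X q μ) (hc : 0 ≤ c) (h : ∀ ω, ‖Y ω‖ ≤ c * (1 + ‖X ω‖)) :
    lpNorm Y q μ ≤ c * (1 + lpNorm X q μ) := by
  have h1X : MemLp (fun ω => 1 + ‖X ω‖) q μ :=
    (memLp_const (1 : ℝ)).add hX.norm
  calc lpNorm Y q μ ≤ c * lpNorm (fun ω => 1 + ‖X ω‖) q μ := by
        refine lpNorm_le_mul_of_norm_le_mul h1X hc fun ω => ?_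
        rw [Real.norm_of_nonneg (by positivity)]
        exact h ω
    _ ≤ c * (lpNorm (fun _ : Ω => (1 : ℝ)) q μ + lpNorm (fun ω => ‖X ω‖) q μ) := by
        gcongr
        exact lpNorm_add_le (memLp_const (1 : ℝ)) (by exact_mod_cast Nat.one_le_iff_ne_zero.2 hq)
    _ = c * (1 + lpNorm X q μ) := by
        rw [lpNorm_norm hX.1, lpNorm_const (by exact_mod_cast hq) (IsProbabilityMeasure.ne_zero μ)]
        simp

theorem memLp_comp_sub_comp {p : ENNReal} {G : E → F} {K : NNReal} {X' : Ω → E}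
    (hG : LipschitzWith K G) (hX : MemLp X p μ) (hX' : MemLp X' p μ) :
    MemLp (fun ω => G (X ω) - G (X' ω)) p μ :=
  (hX.sub hX').of_le_mul ((hG.continuous.comp_aestronglyMeasurable hX.1).sub
    (hG.continuous.comp_aestronglyMeasurable hX'.1)) (.of_forall fun _ => hG.norm_sub_le _ _)

theorem lpNorm_comp_sub_comp_le {p : ENNReal} {G : E → F} {K : NNReal} {X' : Ω → E}
    (hG : LipschitzWith K G) (hX : MemLp X p μ) (hX' : MemLp X' p μ) :
    lpNorm (fun ω => G (X ω) - G (X' ω)) p μ ≤ K * lpNorm (fun ω => X ω - X' ω) p μ :=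
  lpNorm_le_mul_of_norm_le_mul (hX.sub hX') K.coe_nonneg fun _ => hG.norm_sub_le _ _

end Growth

section Scheme

/-- Coefficients of the scheme `x ↦ x + s² f(x) + s g(x) ξ + s² H(x) ξ`: the drift `f` and the
diffusion `g` are `L`-Lipschitz, and all three coefficients grow at most linearly. -/
structure IsMilsteinCoeff {E W : Type*} [NormedAddCommGroup E] [NormedSpace ℝ E]
    [MeasurableSpace E] [NormedAddCommGroup W] [NormedSpace ℝ W] (f : E → E) (g H : E → W →L[ℝ] E)
    (L : NNReal) : Prop where
  lipschitzWith_drift : LipschitzWith L f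
  lipschitzWith_diffusion : LipschitzWith L g
  stronglyMeasurable_correction : StronglyMeasurable H
  norm_drift_le : ∀ x, ‖f x‖ ≤ L * (1 + ‖x‖)
  norm_diffusion_le : ∀ x, ‖g x‖ ≤ L * (1 + ‖x‖)
  norm_correction_le : ∀ x, ‖H x‖ ≤ L * (1 + ‖x‖)

/-- Noise driving the scheme: `ξ k` is revealed at time `k + 1`, is an innovation with respect to
the past `𝓖 k`, and has `L^q` norm at most `Z`. -/
structure IsDrivingNoise {Ω W : Type*} [NormedAddCommGroup W] [NormedSpace ℝ W] [MeasurableSpace W]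
    {mΩ : MeasurableSpace Ω} (ξ : ℕ → Ω → W) (q : ℕ) (Z : ℝ) (𝓖 : Filtration ℕ mΩ)
    (μ : Measure Ω) : Prop where
  isInnovation : ∀ k, IsInnovation (ξ k) q (𝓖 k) μ
  stronglyMeasurable : ∀ k, StronglyMeasurable[𝓖 (k + 1)] (ξ k)
  lpNorm_le : ∀ k, lpNorm (ξ k) q μ ≤ Z

variable {Ω E W : Type*} [NormedAddCommGroup E] [NormedSpace ℝ E]
  [NormedAddCommGroup W] [NormedSpace ℝ W]

/-- The path of the Milstein scheme from `x₀`, with time step `s²` and normalised noise `ξ`. -/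
noncomputable def milsteinPath (f : E → E) (g H : E → W →L[ℝ] E) (s : ℝ) (x₀ : E)
    (ξ : ℕ → Ω → W) : ℕ → Ω → E
  | 0, _ => x₀
  | k + 1, ω =>
    let x := milsteinPath f g H s x₀ ξ k ω
    x + (s ^ 2 • f x + s • (g x + s • H x) (ξ k ω))

variable [MeasurableSpace E] {m mΩ : MeasurableSpace Ω} {μ : Measure Ω}
  {f : E → E} {g H : E → W →L[ℝ] E} {L : NNReal} {ξ : ℕ → Ω → W} {q : ℕ} {Z : ℝ}
  {𝓖 : Filtration ℕ mΩ} {s S : ℝ} {x₀ : E} {X : Ω → E}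

namespace IsMilsteinCoeff

theorem memLp_drift [IsFiniteMeasure μ] (hc : IsMilsteinCoeff f g H L) (hX : MemLp X q μ) :
    MemLp (fun ω => f (X ω)) q μ :=
  memLp_of_norm_le_growth hX (hc.lipschitzWith_drift.continuous.comp_aestronglyMeasurable hX.1)
    fun _ => hc.norm_drift_le _

theorem memLp_diffusion [IsFiniteMeasure μ] (hc : IsMilsteinCoeff f g H L) (hX : MemLp X q μ) :
    MemLp (fun ω => g (X ω)) q μ :=
  memLp_of_norm_le_growth hX (hc.lipschitzWith_diffusion.continuous.comp_aestronglyMeasurable hX.1)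
    fun _ => hc.norm_diffusion_le _

theorem norm_noiseCoeff_le (hc : IsMilsteinCoeff f g H L) (hs : 0 ≤ s) (x : E) :
    ‖g x + s • H x‖ ≤ (1 + s) * L * (1 + ‖x‖) :=
  calc ‖g x + s • H x‖ ≤ L * (1 + ‖x‖) + s * (L * (1 + ‖x‖)) := by
        refine (norm_add_le _ _).trans (add_le_add (hc.norm_diffusion_le x) ?_)
        rw [norm_smul, Real.norm_of_nonneg hs]
        exact mul_le_mul_of_nonneg_left (hc.norm_correction_le x) hs
    _ = (1 + s) * L * (1 + ‖x‖) := by ring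

variable [BorelSpace E]

theorem stronglyMeasurable_correction_comp (hc : IsMilsteinCoeff f g H L)
    (hX : StronglyMeasurable[m] X) : StronglyMeasurable[m] fun ω => H (X ω) :=
  hc.stronglyMeasurable_correction.comp_measurable hX.measurable

theorem stronglyMeasurable_noiseCoeff (hc : IsMilsteinCoeff f g H L)
    (hX : StronglyMeasurable[m] X) : StronglyMeasurable[m] fun ω => g (X ω) + s • H (X ω) :=
  (hc.lipschitzWith_diffusion.continuous.comp_stronglyMeasurable hX).add
    ((hc.stronglyMeasurable_correction_comp hX).const_smul s)

theorem memLp_correction [IsFiniteMeasure μ] (hc : IsMilsteinCoeff f g H L) (hX : MemLp X q μ) :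
    MemLp (fun ω => H (X ω)) q μ :=
  memLp_of_norm_le_growth hX
    (hc.stronglyMeasurable_correction.aestronglyMeasurable.comp_aemeasurable hX.1.aemeasurable)
    fun _ => hc.norm_correction_le _

theorem memLp_noiseCoeff [IsFiniteMeasure μ] (hc : IsMilsteinCoeff f g H L) (hs : 0 ≤ s)
    (hX : MemLp X q μ) : MemLp (fun ω => g (X ω) + s • H (X ω)) q μ :=
  memLp_of_norm_le_growth hX
    ((hc.memLp_diffusion hX).1.add ((hc.memLp_correction hX).1.const_smul s))
    fun _ => hc.norm_noiseCoeff_le hs _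

end IsMilsteinCoeff

variable [BorelSpace E] [MeasurableSpace W]

theorem IsMilsteinCoeff.stronglyMeasurable_milsteinPath (hc : IsMilsteinCoeff f g H L)
    (hξ : IsDrivingNoise ξ q Z 𝓖 μ) (k : ℕ) :
    StronglyMeasurable[𝓖 k] (milsteinPath f g H s x₀ ξ k) := by
  induction k with
  | zero => exact stronglyMeasurable_const
  | succ k ih =>
    have hX := ih.mono (𝓖.mono k.le_succ)
    exact hX.add (((hc.lipschitzWith_drift.continuous.comp_stronglyMeasurable hX).const_smul _).add
      ((isBoundedBilinearMap_apply.continuous.comp_stronglyMeasurable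
        ((hc.stronglyMeasurable_noiseCoeff hX).prodMk (hξ.stronglyMeasurable k))).const_smul _))

variable [BorelSpace W]

theorem IsMilsteinCoeff.memLp_milsteinPath [IsFiniteMeasure μ] (hc : IsMilsteinCoeff f g H L)
    (hξ : IsDrivingNoise ξ q Z 𝓖 μ) (hq : q ≠ 0) (hs : 0 ≤ s) (k : ℕ) :
    MemLp (milsteinPath f g H s x₀ ξ k) q μ := by
  induction k with
  | zero => exact memLp_const x₀
  | succ k ih =>
    exact ih.add (((hc.memLp_drift ih).const_smul _).add (((hξ.isInnovation k).memLp_apply hq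
      (hc.stronglyMeasurable_noiseCoeff (hc.stronglyMeasurable_milsteinPath hξ k))
      (hc.memLp_noiseCoeff hs ih)).const_smul _))

theorem IsMilsteinCoeff.lpNorm_noise_le [IsProbabilityMeasure μ] (hc : IsMilsteinCoeff f g H L)
    (hξ : IsDrivingNoise ξ q Z 𝓖 μ) (hq : q ≠ 0) (hs : 0 ≤ s) (k : ℕ) :
    lpNorm (fun ω => (g (milsteinPath f g H s x₀ ξ k ω)
        + s • H (milsteinPath f g H s x₀ ξ k ω)) (ξ k ω)) q μ
      ≤ (1 + s) * L * (1 + lpNorm (milsteinPath f g H s x₀ ξ k) q μ) * Z := by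
  have hX := hc.memLp_milsteinPath (x₀ := x₀) hξ hq hs k
  calc _ ≤ _ := (hξ.isInnovation k).lpNorm_apply_le hq
        (hc.stronglyMeasurable_noiseCoeff (hc.stronglyMeasurable_milsteinPath hξ k))
        (hc.memLp_noiseCoeff hs hX)
    _ ≤ _ := mul_le_mul (lpNorm_le_of_norm_le_growth hq hX (by positivity)
        fun _ => hc.norm_noiseCoeff_le hs _) (hξ.lpNorm_le k) lpNorm_nonneg
        (mul_nonneg (by positivity) (add_nonneg zero_le_one lpNorm_nonneg))

/-- The increments of the scheme have `L^q` norm at most `s` times this constant, when the path has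
`L^q` norm at most `R`. -/
noncomputable def incrementConst (L S Z R : ℝ) : ℝ :=
  L * (1 + R) * (S + (1 + S) * Z)

theorem IsMilsteinCoeff.lpNorm_milsteinPath_succ_sub_le [IsProbabilityMeasure μ]
    (hc : IsMilsteinCoeff f g H L) (hξ : IsDrivingNoise ξ q Z 𝓖 μ) (hq : q ≠ 0) (hs : 0 ≤ s)
    (hsS : s ≤ S) {k : ℕ} {R : ℝ}
    (hR : lpNorm (milsteinPath f g H s x₀ ξ k) q μ ≤ R) :
    lpNorm (fun ω => milsteinPath f g H s x₀ ξ (k + 1) ω - milsteinPath f g H s x₀ ξ k ω) q μ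
      ≤ s * incrementConst L S Z R := by
  have hX := hc.memLp_milsteinPath (x₀ := x₀) hξ hq hs k
  have hdrift := lpNorm_le_of_norm_le_growth hq hX L.coe_nonneg fun _ => hc.norm_drift_le _
  have hnoise := hc.lpNorm_noise_le (x₀ := x₀) hξ hq hs k
  have hZ : 0 ≤ Z := lpNorm_nonneg.trans (hξ.lpNorm_le 0)
  set r := lpNorm (milsteinPath f g H s x₀ ξ k) q μ
  have hr0 : 0 ≤ r := lpNorm_nonneg
  have hR0 : 0 ≤ R := hr0.trans hR
  have hα : MemLp (fun ω => s ^ 2 • f (milsteinPath f g H s x₀ ξ k ω)) q μ :=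
    (hc.memLp_drift hX).const_smul (s ^ 2)
  simp only [milsteinPath, add_sub_cancel_left]
  calc _ ≤ s ^ 2 * (L * (1 + r)) + s * ((1 + s) * L * (1 + r) * Z) := by
        refine (lpNorm_add_le hα (by exact_mod_cast Nat.one_le_iff_ne_zero.2 hq)).trans ?_
        rw [lpNorm_fun_const_smul (sq_nonneg s), lpNorm_fun_const_smul hs]
        gcongr
    _ = s * (L * (1 + r) * (s + (1 + s) * Z)) := by ring
    _ ≤ s * (L * (1 + R) * (S + (1 + S) * Z)) := by gcongr

end Scheme

section SchemeMoments

variable {Ω ι W : Type*} [Fintype ι] [NormedAddCommGroup W] [NormedSpace ℝ W] [MeasurableSpace W]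
  [BorelSpace W] [SecondCountableTopology W] [CompleteSpace W] {mΩ : MeasurableSpace Ω}
  {μ : Measure Ω} [IsProbabilityMeasure μ] {f : (ι → ℝ) → ι → ℝ}
  {g H : (ι → ℝ) → W →L[ℝ] (ι → ℝ)} {L : NNReal} {ξ : ℕ → Ω → W} {q n N : ℕ} {Z : ℝ}
  {𝓖 : Filtration ℕ mΩ} {s S T : ℝ} {x₀ : ι → ℝ}

namespace IsMilsteinCoeff

theorem isDriftNoiseRecursion_milsteinPath (hc : IsMilsteinCoeff f g H L)
    (hξ : IsDrivingNoise ξ q Z 𝓖 μ) (hq : q ≠ 0) (hs : 0 ≤ s) (hsS : s ≤ S) (N : ℕ) :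
    IsDriftNoiseRecursion (milsteinPath f g H s x₀ ξ)
      (fun k ω => f (milsteinPath f g H s x₀ ξ k ω))
      (fun k ω => (g (milsteinPath f g H s x₀ ξ k ω)
        + s • H (milsteinPath f g H s x₀ ξ k ω)) (ξ k ω)) s (L * (1 + (1 + S) * Z)) 1 q N 𝓖 μ where
  adapted := hc.stronglyMeasurable_milsteinPath hξ
  memLp := hc.memLp_milsteinPath hξ hq hs
  memLp_drift k := hc.memLp_drift (hc.memLp_milsteinPath hξ hq hs k)
  noise k := (hξ.isInnovation k).isMartingaleIncrement_apply hq (𝓖.le k) (𝓖.mono k.le_succ)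
    (hξ.stronglyMeasurable k)
    (hc.stronglyMeasurable_noiseCoeff (hc.stronglyMeasurable_milsteinPath hξ k))
    (hc.memLp_noiseCoeff hs (hc.memLp_milsteinPath hξ hq hs k))
  step _ _ := rfl
  lpNorm_drift_le k _ := by
    have hZ : 0 ≤ (1 + S) * Z :=
      mul_nonneg (by linarith) (lpNorm_nonneg.trans (hξ.lpNorm_le 0))
    refine (lpNorm_le_of_norm_le_growth hq (hc.memLp_milsteinPath hξ hq hs k) L.coe_nonneg
      fun _ => hc.norm_drift_le _).trans ?_
    rw [add_comm (1 : ℝ) (lpNorm _ _ _)]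
    refine mul_le_mul_of_nonneg_right ?_ (add_nonneg lpNorm_nonneg zero_le_one)
    exact le_mul_of_one_le_right L.coe_nonneg (by linarith)
  lpNorm_noise_le k _ := by
    have hZ : 0 ≤ Z := lpNorm_nonneg.trans (hξ.lpNorm_le 0)
    refine (hc.lpNorm_noise_le hξ hq hs k).trans ?_
    have hR : 0 ≤ lpNorm (milsteinPath f g H s x₀ ξ k) q μ := lpNorm_nonneg
    calc _ = L * ((1 + s) * Z) * (lpNorm (milsteinPath f g H s x₀ ξ k) q μ + 1) := by ring
      _ ≤ L * (1 + (1 + S) * Z) * (lpNorm (milsteinPath f g H s x₀ ξ k) q μ + 1) := by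
        gcongr
        nlinarith

theorem lpNorm_milsteinPath_le (hc : IsMilsteinCoeff f g H L)
    (hξ : IsDrivingNoise ξ (n + 2) Z 𝓖 μ) (hn : Even (n + 2)) (hs : 0 ≤ s) (hsS : s ≤ S)
    (hNT : N * s ^ 2 ≤ T) {k : ℕ} (hk : k ≤ N) :
    lpNorm (milsteinPath f g H s x₀ ξ k) (n + 2 : ℕ) μ
      ≤ momentConst (Fintype.card ι) n S (L * (1 + (1 + S) * Z)) T * (‖x₀‖ + 1) := by
  have hS : 0 ≤ S := hs.trans hsS
  have hZ : 0 ≤ Z := lpNorm_nonneg.trans (hξ.lpNorm_le 0)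
  refine ((hc.isDriftNoiseRecursion_milsteinPath hξ (by omega) hs hsS N).lpNorm_le hn hs hsS
    (by positivity) zero_le_one hNT hk).trans_eq ?_
  rw [show milsteinPath f g H s x₀ ξ 0 = fun _ => x₀ from rfl,
    lpNorm_const (by norm_cast) (IsProbabilityMeasure.ne_zero μ)]
  simp

end IsMilsteinCoeff
end SchemeMoments

section TwoSteps

variable {Ω E W : Type*} [NormedAddCommGroup E] [NormedSpace ℝ E]
  [NormedAddCommGroup W] [NormedSpace ℝ W]

/-- The second-order part, divided by `s`, of the noise which the scheme accumulates over the steps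
`k` and `k + 1`: the leading part is `g (X k) (ξ k + ξ (k + 1))`. -/
noncomputable def pairRemainder (f : E → E) (g H : E → W →L[ℝ] E) (s : ℝ) (x₀ : E)
    (ξ : ℕ → Ω → W) (k : ℕ) (ω : Ω) : E :=
  let X := milsteinPath f g H s x₀ ξ
  s • H (X k ω) (ξ k ω) + (g (X (k + 1) ω) - g (X k ω)) (ξ (k + 1) ω)
    + s • H (X (k + 1) ω) (ξ (k + 1) ω)

theorem milsteinPath_add_two (f : E → E) (g H : E → W →L[ℝ] E) (s : ℝ) (x₀ : E) (ξ : ℕ → Ω → W)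
    (k : ℕ) (ω : Ω) :
    milsteinPath f g H s x₀ ξ (k + 2) ω = milsteinPath f g H s x₀ ξ k ω
      + (s ^ 2 • (f (milsteinPath f g H s x₀ ξ k ω) + f (milsteinPath f g H s x₀ ξ (k + 1) ω))
        + s • (g (milsteinPath f g H s x₀ ξ k ω) (ξ k ω + ξ (k + 1) ω)
          + pairRemainder f g H s x₀ ξ k ω)) := by
  rw [milsteinPath.eq_2 f g H s x₀ ξ ω (k + 1)]
  have h := milsteinPath.eq_2 f g H s x₀ ξ ω k
  simp only [pairRemainder]
  nth_rewrite 1 [h]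
  simp only [map_add, add_apply, sub_apply, smul_apply]
  module

variable [MeasurableSpace W] {mΩ : MeasurableSpace Ω}
  {μ : Measure Ω} {f : E → E} {g H : E → W →L[ℝ] E} {L : NNReal} {ξ : ℕ → Ω → W} {q : ℕ} {Z : ℝ}
  {𝓖 : Filtration ℕ mΩ} {s : ℝ} {x₀ : E}

theorem IsDrivingNoise.isMartingaleIncrement_apply [BorelSpace W] [SecondCountableTopology W]
    [CompleteSpace W] [CompleteSpace E] [IsFiniteMeasure μ] (hξ : IsDrivingNoise ξ q Z 𝓖 μ)
    (hq : q ≠ 0) {i j k : ℕ} (hij : i ≤ j) (hjk : j + 1 ≤ k) {A : Ω → W →L[ℝ] E}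
    (hA : StronglyMeasurable[𝓖 j] A) (hAq : MemLp A q μ) :
    IsMartingaleIncrement (fun ω => A ω (ξ j ω)) q (𝓖 i) (𝓖 k) μ :=
  ((hξ.isInnovation j).isMartingaleIncrement_apply hq (𝓖.le j) (𝓖.mono j.le_succ)
    (hξ.stronglyMeasurable j) hA hAq).mono (𝓖.mono hij) (𝓖.mono hjk) (𝓖.le j)

variable [MeasurableSpace E] [BorelSpace E]

theorem IsMilsteinCoeff.stronglyMeasurable_diffusion_succ_sub (hc : IsMilsteinCoeff f g H L)
    (hξ : IsDrivingNoise ξ q Z 𝓖 μ) (k : ℕ) :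
    StronglyMeasurable[𝓖 (k + 1)] fun ω =>
      g (milsteinPath f g H s x₀ ξ (k + 1) ω) - g (milsteinPath f g H s x₀ ξ k ω) :=
  (hc.lipschitzWith_diffusion.continuous.comp_stronglyMeasurable
    (hc.stronglyMeasurable_milsteinPath hξ (k + 1))).sub
    (hc.lipschitzWith_diffusion.continuous.comp_stronglyMeasurable
      ((hc.stronglyMeasurable_milsteinPath hξ k).mono (𝓖.mono k.le_succ)))

variable [BorelSpace W]

theorem IsMilsteinCoeff.lpNorm_pairRemainder_le [IsProbabilityMeasure μ]
    (hc : IsMilsteinCoeff f g H L) (hξ : IsDrivingNoise ξ q Z 𝓖 μ) (hq : q ≠ 0) (hs : 0 ≤ s)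
    {k : ℕ} {R J : ℝ} (hk : lpNorm (milsteinPath f g H s x₀ ξ k) q μ ≤ R)
    (hk' : lpNorm (milsteinPath f g H s x₀ ξ (k + 1)) q μ ≤ R)
    (hJ : lpNorm (fun ω => milsteinPath f g H s x₀ ξ (k + 1) ω - milsteinPath f g H s x₀ ξ k ω) q μ
      ≤ s * J) :
    lpNorm (pairRemainder f g H s x₀ ξ k) q μ ≤ s * (L * (2 * (1 + R) + J) * Z) := by
  have hX (j : ℕ) : MemLp (milsteinPath f g H s x₀ ξ j) q μ := hc.memLp_milsteinPath hξ hq hs j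
  have : 0 ≤ Z := lpNorm_nonneg.trans (hξ.lpNorm_le 0)
  have hcorr (j : ℕ) : MemLp (fun ω => s • H (milsteinPath f g H s x₀ ξ j ω) (ξ j ω)) q μ :=
    ((hξ.isInnovation j).memLp_apply hq (hc.stronglyMeasurable_correction_comp
      (hc.stronglyMeasurable_milsteinPath hξ j)) (hc.memLp_correction (hX j))).const_smul s
  have correction {j : ℕ} (hj : lpNorm (milsteinPath f g H s x₀ ξ j) q μ ≤ R) :
      lpNorm (fun ω => s • H (milsteinPath f g H s x₀ ξ j ω) (ξ j ω)) q μ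
        ≤ s * (L * (1 + R) * Z) := by
    rw [lpNorm_fun_const_smul hs]
    gcongr
    refine ((hξ.isInnovation j).lpNorm_apply_le hq (hc.stronglyMeasurable_correction_comp
      (hc.stronglyMeasurable_milsteinPath hξ j)) (hc.memLp_correction (hX j))).trans ?_
    refine mul_le_mul ((lpNorm_le_of_norm_le_growth hq (hX j) L.coe_nonneg
      fun _ => hc.norm_correction_le _).trans (by gcongr)) (hξ.lpNorm_le j) lpNorm_nonneg ?_
    exact mul_nonneg L.coe_nonneg (add_nonneg zero_le_one (lpNorm_nonneg.trans hj))
  have hdiff := memLp_comp_sub_comp hc.lipschitzWith_diffusion (hX (k + 1)) (hX k)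
  have hdiffusion := ((hξ.isInnovation (k + 1)).lpNorm_apply_le hq
    (hc.stronglyMeasurable_diffusion_succ_sub hξ k) hdiff).trans (mul_le_mul
      ((lpNorm_comp_sub_comp_le hc.lipschitzWith_diffusion (hX (k + 1)) (hX k)).trans
        (mul_le_mul_of_nonneg_left hJ L.coe_nonneg)) (hξ.lpNorm_le (k + 1)) lpNorm_nonneg
      (mul_nonneg L.coe_nonneg (lpNorm_nonneg.trans hJ)))
  calc lpNorm (pairRemainder f g H s x₀ ξ k) q μ
      ≤ s * (L * (1 + R) * Z) + L * (s * J) * Z + s * (L * (1 + R) * Z) :=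
        (lpNorm_add_add_le (hcorr k) ((hξ.isInnovation (k + 1)).memLp_apply hq
          (hc.stronglyMeasurable_diffusion_succ_sub hξ k) hdiff)
          (by exact_mod_cast Nat.one_le_iff_ne_zero.2 hq)).trans
          (add_le_add_three (correction hk) hdiffusion (correction hk'))
    _ = s * (L * (2 * (1 + R) + J) * Z) := by ring

variable [SecondCountableTopology W] [CompleteSpace W] [CompleteSpace E]

theorem IsMilsteinCoeff.isMartingaleIncrement_pairRemainder [IsFiniteMeasure μ]
    (hc : IsMilsteinCoeff f g H L) (hξ : IsDrivingNoise ξ q Z 𝓖 μ) (hq : q ≠ 0) (hs : 0 ≤ s)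
    (k : ℕ) :
    IsMartingaleIncrement (pairRemainder f g H s x₀ ξ k) q (𝓖 k) (𝓖 (k + 2)) μ := by
  have hX (j : ℕ) : MemLp (milsteinPath f g H s x₀ ξ j) q μ := hc.memLp_milsteinPath hξ hq hs j
  have correction {j : ℕ} (hkj : k ≤ j) (hjk : j + 1 ≤ k + 2) :
      IsMartingaleIncrement (fun ω => s • H (milsteinPath f g H s x₀ ξ j ω) (ξ j ω))
        q (𝓖 k) (𝓖 (k + 2)) μ :=
    (hξ.isMartingaleIncrement_apply hq hkj hjk (hc.stronglyMeasurable_correction_comp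
      (hc.stronglyMeasurable_milsteinPath hξ j)) (hc.memLp_correction (hX j))).const_smul s
  exact ((correction le_rfl (by omega)).add hq
    (hξ.isMartingaleIncrement_apply hq k.le_succ le_rfl
      (hc.stronglyMeasurable_diffusion_succ_sub hξ k)
      (memLp_comp_sub_comp hc.lipschitzWith_diffusion (hX (k + 1)) (hX k)))).add hq
    (correction k.le_succ le_rfl)

end TwoSteps

/-! ### Antithetic pairs of paths -/

section Antithetic

variable {Ω : Type*} {mΩ : MeasurableSpace Ω}

/-- The information available at the even times. -/
def evenFiltration (𝓖 : Filtration ℕ mΩ) : Filtration ℕ mΩ where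
  seq n := 𝓖 (2 * n)
  mono' _ _ h := 𝓖.mono (Nat.mul_le_mul_left 2 h)
  le' n := 𝓖.le (2 * n)

/-- Driving noises which differ only by reordering within the pairs of steps `2n`, `2n + 1`: they
carry the same information at even times and have the same sum over each pair. -/
structure IsAntitheticNoise {W : Type*} [NormedAddCommGroup W] [NormedSpace ℝ W] [MeasurableSpace W]
    (ξ η : ℕ → Ω → W) (q : ℕ) (Z : ℝ) (𝓖 𝓗 : Filtration ℕ mΩ) (μ : Measure Ω) : Prop where
  left : IsDrivingNoise ξ q Z 𝓖 μ
  right : IsDrivingNoise η q Z 𝓗 μ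
  filtration_eq : ∀ n, 𝓗 (2 * n) = 𝓖 (2 * n)
  add_eq : ∀ n ω, η (2 * n) ω + η (2 * n + 1) ω = ξ (2 * n) ω + ξ (2 * n + 1) ω

variable {E W : Type*} [NormedAddCommGroup E] [NormedSpace ℝ E] [NormedAddCommGroup W]
  [NormedSpace ℝ W]

/-- The difference, at the even times, of the paths driven by `ξ` and by `η`. -/
noncomputable def antitheticDiff (f : E → E) (g H : E → W →L[ℝ] E) (s : ℝ) (x₀ : E)
    (ξ η : ℕ → Ω → W) (n : ℕ) (ω : Ω) : E :=
  milsteinPath f g H s x₀ ξ (2 * n) ω - milsteinPath f g H s x₀ η (2 * n) ω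

/-- The drift of `antitheticDiff`, divided by `s²`. -/
noncomputable def antitheticDrift (f : E → E) (g H : E → W →L[ℝ] E) (s : ℝ) (x₀ : E)
    (ξ η : ℕ → Ω → W) (n : ℕ) (ω : Ω) : E :=
  let X := milsteinPath f g H s x₀ ξ
  let Y := milsteinPath f g H s x₀ η
  f (X (2 * n) ω) - f (Y (2 * n) ω) + (f (X (2 * n + 1) ω) - f (Y (2 * n + 1) ω))

/-- The noise of `antitheticDiff`, divided by `s`. -/
noncomputable def antitheticNoise (f : E → E) (g H : E → W →L[ℝ] E) (s : ℝ) (x₀ : E)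
    (ξ η : ℕ → Ω → W) (n : ℕ) (ω : Ω) : E :=
  let A := g (milsteinPath f g H s x₀ ξ (2 * n) ω) - g (milsteinPath f g H s x₀ η (2 * n) ω)
  A (ξ (2 * n) ω) + A (ξ (2 * n + 1) ω)
    + (pairRemainder f g H s x₀ ξ (2 * n) ω - pairRemainder f g H s x₀ η (2 * n) ω)

variable [MeasurableSpace W] {μ : Measure Ω} {f : E → E} {g H : E → W →L[ℝ] E} {L : NNReal}
  {ξ η : ℕ → Ω → W} {q : ℕ} {Z : ℝ} {𝓖 𝓗 : Filtration ℕ mΩ} {s J : ℝ} {x₀ : E}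

theorem IsAntitheticNoise.antitheticDiff_succ (hξη : IsAntitheticNoise ξ η q Z 𝓖 𝓗 μ) (n : ℕ)
    (ω : Ω) : antitheticDiff f g H s x₀ ξ η (n + 1) ω = antitheticDiff f g H s x₀ ξ η n ω
      + (s ^ 2 • antitheticDrift f g H s x₀ ξ η n ω
        + s • antitheticNoise f g H s x₀ ξ η n ω) := by
  simp only [antitheticDiff, antitheticDrift, antitheticNoise, mul_add, mul_one,
    milsteinPath_add_two, hξη.add_eq]
  simp only [map_add, sub_apply]
  module

variable [MeasurableSpace E] [BorelSpace E]

theorem IsMilsteinCoeff.stronglyMeasurable_diffusion_sub (hc : IsMilsteinCoeff f g H L)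
    (hξη : IsAntitheticNoise ξ η q Z 𝓖 𝓗 μ) (n : ℕ) : StronglyMeasurable[𝓖 (2 * n)] fun ω =>
      g (milsteinPath f g H s x₀ ξ (2 * n) ω) - g (milsteinPath f g H s x₀ η (2 * n) ω) :=
  (hc.lipschitzWith_diffusion.continuous.comp_stronglyMeasurable
    (hc.stronglyMeasurable_milsteinPath hξη.left (2 * n))).sub
    (hc.lipschitzWith_diffusion.continuous.comp_stronglyMeasurable
      (hξη.filtration_eq n ▸ hc.stronglyMeasurable_milsteinPath hξη.right (2 * n)))

variable [BorelSpace W] [IsProbabilityMeasure μ]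

theorem IsMilsteinCoeff.lpNorm_antitheticDrift_le (hc : IsMilsteinCoeff f g H L)
    (hξη : IsAntitheticNoise ξ η q Z 𝓖 𝓗 μ) (hq : q ≠ 0) (hs : 0 ≤ s) {n : ℕ}
    (hX : lpNorm (fun ω => milsteinPath f g H s x₀ ξ (2 * n + 1) ω
      - milsteinPath f g H s x₀ ξ (2 * n) ω) q μ ≤ s * J)
    (hY : lpNorm (fun ω => milsteinPath f g H s x₀ η (2 * n + 1) ω
      - milsteinPath f g H s x₀ η (2 * n) ω) q μ ≤ s * J) :
    lpNorm (antitheticDrift f g H s x₀ ξ η n) q μ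
      ≤ 2 * L * (lpNorm (antitheticDiff f g H s x₀ ξ η n) q μ + s * J) := by
  have hq1 : (1 : ENNReal) ≤ q := by exact_mod_cast Nat.one_le_iff_ne_zero.2 hq
  have hXq (j : ℕ) := hc.memLp_milsteinPath (x₀ := x₀) hξη.left hq hs j
  have hYq (j : ℕ) := hc.memLp_milsteinPath (x₀ := x₀) hξη.right hq hs j
  have odd_diff : lpNorm (fun ω => milsteinPath f g H s x₀ ξ (2 * n + 1) ω
      - milsteinPath f g H s x₀ η (2 * n + 1) ω) q μ
        ≤ lpNorm (antitheticDiff f g H s x₀ ξ η n) q μ + s * J + s * J := by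
    refine (congrArg (lpNorm · q μ) (funext fun ω => ?_)).trans_le ((lpNorm_sub_le
      (((hXq (2 * n)).sub (hYq (2 * n))).add ((hXq (2 * n + 1)).sub (hXq (2 * n)))) hq1).trans
        (add_le_add ((lpNorm_add_le ((hXq (2 * n)).sub (hYq (2 * n))) hq1).trans
          (add_le_add_right hX _)) hY))
    simp only [Pi.add_apply, Pi.sub_apply]
    abel
  calc lpNorm (antitheticDrift f g H s x₀ ξ η n) q μ
      ≤ L * lpNorm (antitheticDiff f g H s x₀ ξ η n) q μ
        + L * (lpNorm (antitheticDiff f g H s x₀ ξ η n) q μ + s * J + s * J) := by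
        refine (lpNorm_add_le (memLp_comp_sub_comp hc.lipschitzWith_drift (hXq _) (hYq _))
          hq1).trans (add_le_add
            (lpNorm_comp_sub_comp_le hc.lipschitzWith_drift (hXq _) (hYq _)) ?_)
        exact (lpNorm_comp_sub_comp_le hc.lipschitzWith_drift (hXq _) (hYq _)).trans
          (by gcongr)
    _ = 2 * L * (lpNorm (antitheticDiff f g H s x₀ ξ η n) q μ + s * J) := by ring

variable [SecondCountableTopology W] [CompleteSpace W] [CompleteSpace E]

theorem IsMilsteinCoeff.isMartingaleIncrement_antitheticNoise (hc : IsMilsteinCoeff f g H L)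
    (hξη : IsAntitheticNoise ξ η q Z 𝓖 𝓗 μ) (hq : q ≠ 0) (hs : 0 ≤ s) (n : ℕ) :
    IsMartingaleIncrement (antitheticNoise f g H s x₀ ξ η n) q (𝓖 (2 * n)) (𝓖 (2 * n + 2)) μ := by
  have hA := hc.stronglyMeasurable_diffusion_sub (s := s) (x₀ := x₀) hξη n
  have hAq := memLp_comp_sub_comp hc.lipschitzWith_diffusion
    (hc.memLp_milsteinPath (x₀ := x₀) hξη.left hq hs (2 * n))
    (hc.memLp_milsteinPath (x₀ := x₀) hξη.right hq hs (2 * n))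
  have hY := hc.isMartingaleIncrement_pairRemainder (x₀ := x₀) hξη.right hq hs (2 * n)
  rw [hξη.filtration_eq n, show 2 * n + 2 = 2 * (n + 1) from rfl, hξη.filtration_eq] at hY
  exact ((hξη.left.isMartingaleIncrement_apply hq le_rfl (by omega) hA hAq).add hq
    (hξη.left.isMartingaleIncrement_apply hq (by omega) le_rfl
      (hA.mono (𝓖.mono (by omega))) hAq)).add hq
    ((hc.isMartingaleIncrement_pairRemainder hξη.left hq hs (2 * n)).sub hq hY)

theorem IsMilsteinCoeff.lpNorm_antitheticNoise_le (hc : IsMilsteinCoeff f g H L)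
    (hξη : IsAntitheticNoise ξ η q Z 𝓖 𝓗 μ) (hq : q ≠ 0) (hs : 0 ≤ s) {n : ℕ}
    (hX : lpNorm (pairRemainder f g H s x₀ ξ (2 * n)) q μ ≤ s * J)
    (hY : lpNorm (pairRemainder f g H s x₀ η (2 * n)) q μ ≤ s * J) :
    lpNorm (antitheticNoise f g H s x₀ ξ η n) q μ
      ≤ 2 * (L * lpNorm (antitheticDiff f g H s x₀ ξ η n) q μ * Z + s * J) := by
  have hq1 : (1 : ENNReal) ≤ q := by exact_mod_cast Nat.one_le_iff_ne_zero.2 hq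
  have hXq := hc.memLp_milsteinPath (x₀ := x₀) hξη.left hq hs (2 * n)
  have hYq := hc.memLp_milsteinPath (x₀ := x₀) hξη.right hq hs (2 * n)
  have hA := hc.stronglyMeasurable_diffusion_sub (s := s) (x₀ := x₀) hξη n
  have hAq := memLp_comp_sub_comp hc.lipschitzWith_diffusion hXq hYq
  have hA' : StronglyMeasurable[𝓖 (2 * n + 1)] _ := hA.mono (𝓖.mono (Nat.le_succ _))
  have leading (j : ℕ) (hj : StronglyMeasurable[𝓖 j] fun ω =>
      g (milsteinPath f g H s x₀ ξ (2 * n) ω) - g (milsteinPath f g H s x₀ η (2 * n) ω)) :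
      lpNorm (fun ω => (g (milsteinPath f g H s x₀ ξ (2 * n) ω)
          - g (milsteinPath f g H s x₀ η (2 * n) ω)) (ξ j ω)) q μ
        ≤ L * lpNorm (antitheticDiff f g H s x₀ ξ η n) q μ * Z :=
    ((hξη.left.isInnovation j).lpNorm_apply_le hq hj hAq).trans
      (mul_le_mul (lpNorm_comp_sub_comp_le hc.lipschitzWith_diffusion hXq hYq)
        (hξη.left.lpNorm_le j) lpNorm_nonneg (mul_nonneg L.coe_nonneg lpNorm_nonneg))
  have remainder : lpNorm (fun ω => pairRemainder f g H s x₀ ξ (2 * n) ω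
      - pairRemainder f g H s x₀ η (2 * n) ω) q μ ≤ s * J + s * J :=
    (lpNorm_sub_le (hc.isMartingaleIncrement_pairRemainder hξη.left hq hs (2 * n)).memLp hq1).trans
      (add_le_add hX hY)
  refine (lpNorm_add_add_le ((hξη.left.isInnovation _).memLp_apply hq hA hAq)
    ((hξη.left.isInnovation _).memLp_apply hq hA' hAq) hq1).trans
    ((add_le_add_three (leading _ hA) (leading _ hA') remainder).trans_eq ?_)
  ring

end Antithetic

section AntitheticMoments

/-- The constant in the `L^(n+2)` bound for the maximal difference between the paths driven by
antithetic noises in `ℝ^d` that start at norm `r`. -/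
noncomputable def antitheticConst (d n : ℕ) (L S Z T r : ℝ) : ℝ :=
  let R := momentConst d n S (L * (1 + (1 + S) * Z)) T * (r + 1)
  let κ := 2 * L * (1 + Z) * (3 + 2 * R + incrementConst L S Z R)
  3 * (1 + T * κ) * (momentConst d n S κ T + 1)

variable {Ω ι W : Type*} [Fintype ι] [NormedAddCommGroup W] [NormedSpace ℝ W] [MeasurableSpace W]
  [BorelSpace W] [SecondCountableTopology W] [CompleteSpace W] {mΩ : MeasurableSpace Ω}
  {μ : Measure Ω} [IsProbabilityMeasure μ] {f : (ι → ℝ) → ι → ℝ}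
  {g H : (ι → ℝ) → W →L[ℝ] (ι → ℝ)} {L : NNReal} {ξ η : ℕ → Ω → W} {q n N : ℕ} {Z : ℝ}
  {𝓖 𝓗 : Filtration ℕ mΩ} {s S T R : ℝ} {x₀ : ι → ℝ}

namespace IsMilsteinCoeff

theorem isDriftNoiseRecursion_antitheticDiff (hc : IsMilsteinCoeff f g H L)
    (hξη : IsAntitheticNoise ξ η q Z 𝓖 𝓗 μ) (hq : q ≠ 0) (hs : 0 ≤ s) (hsS : s ≤ S)
    (hX : ∀ k ≤ 2 * N, lpNorm (milsteinPath f g H s x₀ ξ k) q μ ≤ R)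
    (hY : ∀ k ≤ 2 * N, lpNorm (milsteinPath f g H s x₀ η k) q μ ≤ R) :
    IsDriftNoiseRecursion (antitheticDiff f g H s x₀ ξ η) (antitheticDrift f g H s x₀ ξ η)
      (antitheticNoise f g H s x₀ ξ η) s
      (2 * L * (1 + Z) * (3 + 2 * R + incrementConst L S Z R)) s q N (evenFiltration 𝓖) μ := by
  have hXq (j : ℕ) := hc.memLp_milsteinPath (x₀ := x₀) hξη.left hq hs j
  have hYq (j : ℕ) := hc.memLp_milsteinPath (x₀ := x₀) hξη.right hq hs j
  have hS : 0 ≤ S := hs.trans hsS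
  have hZ : 0 ≤ Z := lpNorm_nonneg.trans (hξη.left.lpNorm_le 0)
  have hR : 0 ≤ R := lpNorm_nonneg.trans (hX 0 (Nat.zero_le _))
  have : (0 : ℝ) ≤ L := L.coe_nonneg
  have hJ : 0 ≤ incrementConst L S Z R := by unfold incrementConst; positivity
  have hJX {n : ℕ} (hn : n < N) := hc.lpNorm_milsteinPath_succ_sub_le hξη.left hq hs hsS
    (hX (2 * n) (by omega))
  have hJY {n : ℕ} (hn : n < N) := hc.lpNorm_milsteinPath_succ_sub_le hξη.right hq hs hsS
    (hY (2 * n) (by omega))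
  refine ⟨fun n => ?_, fun n => (hXq _).sub (hYq _), fun n => ?_,
    hc.isMartingaleIncrement_antitheticNoise hξη hq hs, hξη.antitheticDiff_succ,
    fun n hn => ?_, fun n hn => ?_⟩
  · exact (hc.stronglyMeasurable_milsteinPath hξη.left (2 * n)).sub
      (hξη.filtration_eq n ▸ hc.stronglyMeasurable_milsteinPath hξη.right (2 * n))
  · exact (memLp_comp_sub_comp hc.lipschitzWith_drift (hXq _) (hYq _)).add
      (memLp_comp_sub_comp hc.lipschitzWith_drift (hXq _) (hYq _))
  · have hD : 0 ≤ lpNorm (antitheticDiff f g H s x₀ ξ η n) q μ := lpNorm_nonneg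
    calc _ ≤ 2 * L * (lpNorm (antitheticDiff f g H s x₀ ξ η n) q μ
          + s * incrementConst L S Z R) :=
        hc.lpNorm_antitheticDrift_le hξη hq hs (hJX hn) (hJY hn)
      _ ≤ 2 * L * (1 + Z) * ((3 + 2 * R + incrementConst L S Z R)
          * (lpNorm (antitheticDiff f g H s x₀ ξ η n) q μ + s)) := by
        refine mul_le_mul (le_mul_of_one_le_right (by positivity) (by linarith)) ?_
          (by positivity) (by positivity)
        nlinarith [mul_nonneg hJ hD, mul_nonneg hR hD, mul_nonneg hR hs]
      _ = _ := by ring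
  · have hD : 0 ≤ lpNorm (antitheticDiff f g H s x₀ ξ η n) q μ := lpNorm_nonneg
    calc _ ≤ 2 * (L * lpNorm (antitheticDiff f g H s x₀ ξ η n) q μ * Z
          + s * (L * (2 * (1 + R) + incrementConst L S Z R) * Z)) :=
        hc.lpNorm_antitheticNoise_le hξη hq hs
          (hc.lpNorm_pairRemainder_le hξη.left hq hs (hX _ (by omega)) (hX _ (by omega)) (hJX hn))
          (hc.lpNorm_pairRemainder_le hξη.right hq hs (hY _ (by omega)) (hY _ (by omega)) (hJY hn))
      _ = 2 * L * Z * (lpNorm (antitheticDiff f g H s x₀ ξ η n) q μ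
          + s * (2 * (1 + R) + incrementConst L S Z R)) := by ring
      _ ≤ 2 * L * (1 + Z) * ((3 + 2 * R + incrementConst L S Z R)
          * (lpNorm (antitheticDiff f g H s x₀ ξ η n) q μ + s)) := by
        gcongr
        · linarith
        · nlinarith [mul_nonneg hJ hD, mul_nonneg hR hD, mul_nonneg hR hs]
      _ = _ := by ring

theorem lpNorm_partialSups_antitheticDiff_le (hc : IsMilsteinCoeff f g H L)
    (hξη : IsAntitheticNoise ξ η (n + 2) Z 𝓖 𝓗 μ) (hn : Even (n + 2)) (hs : 0 ≤ s) (hsS : s ≤ S)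
    (hNT : 2 * N * s ^ 2 ≤ T) :
    lpNorm (partialSups (fun k ω => ‖antitheticDiff f g H s x₀ ξ η k ω‖) N) (n + 2 : ℕ) μ
      ≤ antitheticConst (Fintype.card ι) n L S Z T ‖x₀‖ * s := by
  have hS : 0 ≤ S := hs.trans hsS
  have hZ : 0 ≤ Z := lpNorm_nonneg.trans (hξη.left.lpNorm_le 0)
  have hNfine : ((2 * N : ℕ) : ℝ) * s ^ 2 ≤ T := by exact_mod_cast hNT
  have hNcoarse : N * s ^ 2 ≤ T :=
    le_trans (by nlinarith [mul_nonneg N.cast_nonneg (sq_nonneg s)]) hNT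
  have hX (k : ℕ) (hk : k ≤ 2 * N) :=
    hc.lpNorm_milsteinPath_le (x₀ := x₀) hξη.left hn hs hsS hNfine hk
  have hY (k : ℕ) (hk : k ≤ 2 * N) :=
    hc.lpNorm_milsteinPath_le (x₀ := x₀) hξη.right hn hs hsS hNfine hk
  have hR := lpNorm_nonneg.trans (hX 0 (Nat.zero_le _))
  have h := (hc.isDriftNoiseRecursion_antitheticDiff hξη (by omega) hs hsS hX
    hY).lpNorm_partialSups_norm_le hn hs hsS
    (by unfold incrementConst; positivity) hs hNcoarse
  rwa [show antitheticDiff f g H s x₀ ξ η 0 = 0 from funext fun _ => sub_self x₀, lpNorm_zero,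
    zero_add] at h

end IsMilsteinCoeff
end AntitheticMoments

section Coefficients

theorem norm_le_growth_of_lipschitzWith {E F : Type*} [SeminormedAddCommGroup E]
    [SeminormedAddCommGroup F] {G : E → F} {K : NNReal} (hG : LipschitzWith K G) (x : E) :
    ‖G x‖ ≤ (‖G 0‖₊ + K) * (1 + ‖x‖) := by
  have hx : ‖G x - G 0‖ ≤ K * ‖x‖ := by simpa using hG.norm_sub_le x 0
  have hx' := norm_le_norm_add_norm_sub' (G x) (G 0)
  rw [coe_nnnorm]
  nlinarith [K.coe_nonneg, mul_nonneg (norm_nonneg (G 0)) (norm_nonneg x)]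

/-- The bilinear matrix-vector product, as a continuous map. -/
noncomputable def mulVecCLM (ι κ : Type*) [Fintype ι] [Fintype κ] :
    (ι → κ → ℝ) →L[ℝ] (κ → ℝ) →L[ℝ] (ι → ℝ) :=
  LinearMap.toContinuousBilinearMap
    (Matrix.mulVecBilin ℝ ℝ : Matrix ι κ ℝ →ₗ[ℝ] (κ → ℝ) →ₗ[ℝ] (ι → ℝ))

/-- The values of the normalised noise of a Milstein step: a Gaussian vector, together with the
matrix of its centred products. -/
abbrev NoiseSpace (m : ℕ) : Type :=
  (Fin m → ℝ) × (Fin m × Fin m → ℝ)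

variable {d m : ℕ}

/-- The action of a diffusion matrix on the Gaussian component of the noise. -/
noncomputable def diffusionCLM (d m : ℕ) :
    (Fin d → Fin m → ℝ) →L[ℝ] NoiseSpace m →L[ℝ] (Fin d → ℝ) :=
  ((ContinuousLinearMap.fst ℝ _ _).precomp _).comp (mulVecCLM (Fin d) (Fin m))

/-- The action of a correction tensor on the component of the noise made of centred products. -/
noncomputable def correctionCLM (d m : ℕ) :
    (Fin d → Fin m × Fin m → ℝ) →L[ℝ] NoiseSpace m →L[ℝ] (Fin d → ℝ) :=
  ((ContinuousLinearMap.snd ℝ _ _).precomp _).comp (mulVecCLM (Fin d) (Fin m × Fin m))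

/-- The tensor `milsteinH` with its two noise indices paired. -/
noncomputable def correctionTensor (g : (Fin d → ℝ) → Fin d → Fin m → ℝ) (x : Fin d → ℝ) :
    Fin d → Fin m × Fin m → ℝ :=
  fun i jk => milsteinH g x i jk.1 jk.2

variable {f : (Fin d → ℝ) → Fin d → ℝ} {g : (Fin d → ℝ) → Fin d → Fin m → ℝ} {Kf Kg : NNReal}

theorem abs_apply_apply_le_norm (A : Fin d → Fin m → ℝ) (i : Fin d) (j : Fin m) : |A i j| ≤ ‖A‖ :=
  (norm_le_pi_norm (A i) j).trans (norm_le_pi_norm A i)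

theorem lipschitzWith_apply_apply (hg : LipschitzWith Kg g) (i : Fin d) (k : Fin m) :
    LipschitzWith Kg fun x => g x i k :=
  LipschitzWith.of_dist_le_mul fun x y =>
    ((dist_le_pi_dist (g x i) (g y i) k).trans (dist_le_pi_dist (g x) (g y) i)).trans
      (hg.dist_le_mul x y)

theorem measurable_correctionTensor (hg : LipschitzWith Kg g) : Measurable (correctionTensor g) :=
  measurable_pi_lambda _ fun _ => measurable_pi_lambda _ fun jk =>
    (Finset.measurable_fun_sum _ fun l _ =>
      (lipschitzWith_apply_apply hg l jk.1).continuous.measurable.mul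
        (measurable_fderiv_apply_const ℝ _ _)).const_mul _

theorem norm_correctionTensor_le (hg : LipschitzWith Kg g) (x : Fin d → ℝ) :
    ‖correctionTensor g x‖ ≤ d * Kg * ‖g x‖ := by
  refine (pi_norm_le_iff_of_nonneg (by positivity)).2 fun i =>
    (pi_norm_le_iff_of_nonneg (by positivity)).2 fun jk => ?_
  have hterm (l : Fin d) :
      |g x l jk.1 * fderiv ℝ (fun y => g y i jk.2) x (Pi.single l 1)| ≤ Kg * ‖g x‖ := by
    have hderiv : ‖fderiv ℝ (fun y => g y i jk.2) x (Pi.single l 1)‖ ≤ Kg :=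
      calc _ ≤ ‖fderiv ℝ (fun y => g y i jk.2) x‖ * ‖(Pi.single l 1 : Fin d → ℝ)‖ :=
            ContinuousLinearMap.le_opNorm _ _
        _ ≤ Kg := by
            rw [Pi.norm_single, norm_one, mul_one]
            exact norm_fderiv_le_of_lipschitz ℝ (lipschitzWith_apply_apply hg i jk.2)
    rw [abs_mul, mul_comm]
    exact mul_le_mul hderiv (abs_apply_apply_le_norm _ _ _) (abs_nonneg _) Kg.coe_nonneg
  have hsum := (Finset.abs_sum_le_sum_abs _ _).trans
    (Finset.sum_le_card_nsmul Finset.univ _ _ fun l _ => hterm l)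
  rw [Finset.card_univ, Fintype.card_fin, nsmul_eq_mul] at hsum
  rw [correctionTensor, milsteinH, Real.norm_eq_abs, abs_mul, abs_of_pos one_half_pos]
  linarith [abs_nonneg (∑ l, g x l jk.1 * fderiv ℝ (fun y => g y i jk.2) x (Pi.single l 1))]

theorem exists_isMilsteinCoeff (hf : LipschitzWith Kf f) (hg : LipschitzWith Kg g) :
    ∃ L, IsMilsteinCoeff f (fun x => diffusionCLM d m (g x))
      (fun x => correctionCLM d m (correctionTensor g x)) L := by
  let Cf := ‖f 0‖₊ + Kf
  let Cg := ‖diffusionCLM d m‖₊ * (‖g 0‖₊ + Kg)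
  let Ch := ‖correctionCLM d m‖₊ * (d * Kg * (‖g 0‖₊ + Kg))
  have hCf : Cf ≤ Cf + Cg + Ch := by rw [add_assoc]; exact le_self_add
  have hCg : Cg ≤ Cf + Cg + Ch := by rw [add_right_comm]; exact le_add_self
  have hCh : Ch ≤ Cf + Cg + Ch := le_add_self
  refine ⟨Cf + Cg + Ch, hf.weaken (le_add_self.trans hCf),
    ((diffusionCLM d m).lipschitz.comp hg).weaken
      ((mul_le_mul_right le_add_self _).trans hCg),
    (correctionCLM d m).continuous.comp_stronglyMeasurable
      (measurable_correctionTensor hg).stronglyMeasurable, fun x => ?_, fun x => ?_, fun x => ?_⟩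
  · exact (norm_le_growth_of_lipschitzWith hf x).trans
      (mul_le_mul_of_nonneg_right (by exact_mod_cast hCf) (by positivity))
  · calc _ ≤ ‖diffusionCLM d m‖ * ‖g x‖ := ContinuousLinearMap.le_opNorm _ _
      _ ≤ ‖diffusionCLM d m‖ * ((‖g 0‖₊ + Kg) * (1 + ‖x‖)) := by
          gcongr; exact norm_le_growth_of_lipschitzWith hg x
      _ = Cg * (1 + ‖x‖) := by simp only [Cg]; push_cast; ring
      _ ≤ _ := mul_le_mul_of_nonneg_right (by exact_mod_cast hCg) (by positivity)
  · calc _ ≤ ‖correctionCLM d m‖ * ‖correctionTensor g x‖ := ContinuousLinearMap.le_opNorm _ _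
      _ ≤ ‖correctionCLM d m‖ * (d * Kg * ((‖g 0‖₊ + Kg) * (1 + ‖x‖))) := by
          gcongr
          refine (norm_correctionTensor_le hg x).trans ?_
          gcongr; exact norm_le_growth_of_lipschitzWith hg x
      _ = Ch * (1 + ‖x‖) := by simp only [Ch]; push_cast; ring
      _ ≤ _ := mul_le_mul_of_nonneg_right (by exact_mod_cast hCh) (by positivity)

end Coefficients

/-! ### Gaussian driving noise -/

section GaussianNoise

variable {d m : ℕ}

theorem lpNorm_comp_measurePreserving {α β E : Type*} {mα : MeasurableSpace α}
    {mβ : MeasurableSpace β} [NormedAddCommGroup E] {μ : Measure α} {ν : Measure β} {φ : α → β}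
    {f : β → E} {p : ENNReal} (hf : AEStronglyMeasurable f ν) (hφ : MeasurePreserving φ μ ν) :
    lpNorm (fun a => f (φ a)) p μ = lpNorm f p ν := by
  rw [← toReal_eLpNorm (f := fun a => f (φ a)) (hf.comp_measurePreserving hφ), ← toReal_eLpNorm hf]
  exact congrArg _ (eLpNorm_comp_measurePreserving hf hφ)

/-- The normalised noise of a Milstein step, as a function of the normalised Brownian increment. -/
def milsteinNoise (z : Fin m → ℝ) : NoiseSpace m :=
  (z, fun jk => z jk.1 * z jk.2 - if jk.1 = jk.2 then 1 else 0)

theorem measurable_milsteinNoise : Measurable (milsteinNoise (m := m)) :=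
  measurable_id.prodMk (measurable_pi_lambda _ fun jk =>
    ((measurable_pi_apply jk.1).mul (measurable_pi_apply jk.2)).sub measurable_const)

theorem milsteinStep_sq_smul (f : (Fin d → ℝ) → Fin d → ℝ) (g : (Fin d → ℝ) → Fin d → Fin m → ℝ)
    (s : ℝ) (x : Fin d → ℝ) (z : Fin m → ℝ) :
    milsteinStep f g (s ^ 2) x (s • z) = x + (s ^ 2 • f x
      + s • (diffusionCLM d m (g x) + s • correctionCLM d m (correctionTensor g x))
        (milsteinNoise z)) := by
  ext i
  have hdiff : diffusionCLM d m (g x) (milsteinNoise z) i = ∑ j, g x i j * z j := rfl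
  have hcorr : correctionCLM d m (correctionTensor g x) (milsteinNoise z) i
      = ∑ j, ∑ k, milsteinH g x i j k * (z j * z k - if j = k then 1 else 0) :=
    Fintype.sum_prod_type _
  have hsq (j k : Fin m) : (s * z j * (s * z k) - if j = k then s ^ 2 else 0)
      = s * (s * (z j * z k - if j = k then 1 else 0)) := by
    split_ifs <;> ring
  simp only [milsteinStep, add_apply, smul_apply, Pi.add_apply, Pi.smul_apply, smul_eq_mul, hdiff,
    hcorr, hsq]
  simp only [mul_left_comm _ s, ← Finset.mul_sum]
  ring

/-- The law of `m` independent standard Gaussian variables. -/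
noncomputable def gaussianPi (m : ℕ) : Measure (Fin m → ℝ) :=
  Measure.pi fun _ => gaussianReal 0 1

instance : IsProbabilityMeasure (gaussianPi m) := by
  unfold gaussianPi; infer_instance

theorem measurePreserving_eval_gaussianPi (j : Fin m) :
    MeasurePreserving (Function.eval j) (gaussianPi m) (gaussianReal 0 1) :=
  measurePreserving_eval _ j

theorem memLp_eval_gaussianPi (j : Fin m) (q : NNReal) :
    MemLp (fun z : Fin m → ℝ => z j) q (gaussianPi m) :=
  (memLp_id_gaussianReal q).comp_measurePreserving (measurePreserving_eval_gaussianPi j)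

theorem memLp_mul_gaussianPi (j k : Fin m) (q : NNReal) :
    MemLp (fun z : Fin m → ℝ => z j * z k) q (gaussianPi m) := by
  have : ENNReal.HolderTriple (2 * q : NNReal) (2 * q : NNReal) q := by
    constructor
    rw [← two_mul, ENNReal.coe_mul, ENNReal.mul_inv (by simp) (by simp), ← mul_assoc]
    simp [ENNReal.mul_inv_cancel]
  exact (memLp_eval_gaussianPi k (2 * q)).mul' (memLp_eval_gaussianPi j (2 * q))

theorem memLp_milsteinNoise (q : NNReal) : MemLp (milsteinNoise (m := m)) q (gaussianPi m) :=
  memLp_prod_iff.2 ⟨MemLp.of_eval fun j => memLp_eval_gaussianPi j q,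
    MemLp.of_eval fun jk => (memLp_mul_gaussianPi jk.1 jk.2 q).sub (memLp_const _)⟩

theorem integral_eval_gaussianPi (j : Fin m) : ∫ z, z j ∂gaussianPi m = 0 :=
  (measurePreserving_eval_gaussianPi j).hasLaw.integral_eq.trans integral_id_gaussianReal

theorem integral_mul_gaussianPi (j k : Fin m) :
    ∫ z, z j * z k ∂gaussianPi m = if j = k then 1 else 0 := by
  split_ifs with hjk
  · subst hjk
    have hvar : Var[fun z => z j; gaussianPi m] = Var[id; gaussianReal 0 1] :=
      (measurePreserving_eval_gaussianPi j).hasLaw.variance_eq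
    rw [variance_of_integral_eq_zero (measurable_pi_apply j).aemeasurable
      (integral_eval_gaussianPi j), variance_id_gaussianReal] at hvar
    simpa [pow_two] using hvar
  · have hind : IndepFun (fun z : Fin m → ℝ => z j) (fun z => z k) (gaussianPi m) :=
      (iIndepFun_pi (X := fun _ => id) fun _ => aemeasurable_id).indepFun hjk
    rw [hind.integral_fun_mul_eq_mul_integral (measurable_pi_apply j).aestronglyMeasurable
      (measurable_pi_apply k).aestronglyMeasurable, integral_eval_gaussianPi, zero_mul]

theorem integral_milsteinNoise : ∫ z, milsteinNoise z ∂gaussianPi m = 0 := by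
  have hz (j : Fin m) : Integrable (fun z : Fin m → ℝ => z j) (gaussianPi m) :=
    (memLp_eval_gaussianPi j 1).integrable le_rfl
  have hzz (jk : Fin m × Fin m) : Integrable (fun z : Fin m → ℝ => z jk.1 * z jk.2
      - if jk.1 = jk.2 then 1 else 0) (gaussianPi m) :=
    ((memLp_mul_gaussianPi jk.1 jk.2 1).integrable le_rfl).sub (integrable_const _)
  refine (integral_pair (Integrable.of_eval hz) (Integrable.of_eval hzz)).trans ?_
  ext j
  · exact (eval_integral hz j).trans (integral_eval_gaussianPi j)
  · refine (eval_integral hzz j).trans ?_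
    rw [integral_sub ((memLp_mul_gaussianPi j.1 j.2 1).integrable le_rfl) (integrable_const _),
      integral_mul_gaussianPi]
    simp

variable {Ω : Type*} {m₀ mΩ : MeasurableSpace Ω} {μ : Measure Ω} {z : Ω → Fin m → ℝ}

theorem isInnovation_milsteinNoise (hz : MeasurePreserving z μ (gaussianPi m))
    (hind : Indep (MeasurableSpace.comap z inferInstance) m₀ μ) (q : ℕ) :
    IsInnovation (fun ω => milsteinNoise (z ω)) q m₀ μ where
  measurable := measurable_milsteinNoise.comp hz.measurable
  memLp := (memLp_milsteinNoise q).comp_measurePreserving hz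
  integral_eq_zero := (hz.hasLaw.integral_comp
    measurable_milsteinNoise.aestronglyMeasurable).trans integral_milsteinNoise
  indep := indep_of_indep_of_le_left hind
    (MeasurableSpace.comap_comp.symm.trans_le
      (MeasurableSpace.comap_mono measurable_milsteinNoise.comap_le))

end GaussianNoise

section RevealFiltration

variable {Ω κ : Type*} {mΩ : MeasurableSpace Ω} {𝓜 : κ → MeasurableSpace Ω} {σ τ : κ → ℕ}

/-- The filtration which reveals the information `𝓜 i` just after time `σ i`. -/
def revealFiltration (σ : κ → ℕ) (h𝓜 : ∀ i, 𝓜 i ≤ mΩ) : Filtration ℕ mΩ where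
  seq n := ⨆ i ∈ {i | σ i < n}, 𝓜 i
  mono' _ _ hab := biSup_mono fun _ hi => lt_of_lt_of_le hi hab
  le' _ := iSup₂_le fun i _ => h𝓜 i

theorem iSup_le_revealFiltration_succ (h𝓜 : ∀ i, 𝓜 i ≤ mΩ) (n : ℕ) :
    ⨆ i ∈ {i | σ i = n}, 𝓜 i ≤ revealFiltration σ h𝓜 (n + 1) :=
  biSup_mono fun _ hi => Nat.lt_succ_of_le (le_of_eq hi)

theorem indep_iSup_revealFiltration {μ : Measure Ω} (h𝓜 : ∀ i, 𝓜 i ≤ mΩ) (hind : iIndep 𝓜 μ)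
    (n : ℕ) : Indep (⨆ i ∈ {i | σ i = n}, 𝓜 i) (revealFiltration σ h𝓜 n) μ :=
  indep_iSup_of_disjoint h𝓜 hind (Set.disjoint_left.2 fun _ hi => (le_of_eq hi.symm).not_gt)

theorem revealFiltration_congr (h𝓜 : ∀ i, 𝓜 i ≤ mΩ) {n : ℕ} (h : ∀ i, σ i < n ↔ τ i < n) :
    revealFiltration σ h𝓜 n = revealFiltration τ h𝓜 n := by
  change ⨆ i ∈ {i | σ i < n}, 𝓜 i = ⨆ i ∈ {i | τ i < n}, 𝓜 i
  rw [show {i | σ i < n} = {i | τ i < n} from Set.ext h]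

end RevealFiltration

section BrownianIncrements

variable {Ω : Type*} {mΩ : MeasurableSpace Ω} {μ : Measure Ω} {N d m : ℕ}
  {W : Fin N → Bool → Ω → Fin m → ℝ} {s : ℝ} {b : Bool}

/-- `W n false` and `W n true` are the Brownian increments over the two halves of the `n`-th coarse
time step, each half having length `s²`. -/
structure IsBrownianIncrements (W : Fin N → Bool → Ω → Fin m → ℝ) (s : ℝ) (μ : Measure Ω) :
    Prop where
  measurable : ∀ n c j, Measurable fun ω => W n c ω j
  map_eq : ∀ n c j, μ.map (fun ω => W n c ω j) = gaussianReal 0 (s ^ 2).toNNReal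
  iIndepFun : iIndepFun (fun q : Fin N × Bool × Fin m => fun ω => W q.1 q.2.1 ω q.2.2) μ

/-- The step at which a coordinate of the increments is used, when the step `2n` uses `W n b` and
the step `2n + 1` uses `W n (!b)`. -/
def pairTime (b : Bool) (q : Fin N × Bool × Fin m) : ℕ :=
  2 * q.1 + (b ^^ q.2.1).toNat

/-- The normalised noise of the scheme in which the step `2n` uses the increment `W n b` and the
step `2n + 1` uses `W n (!b)`; it vanishes from the step `2N` on. -/
noncomputable def pairNoise (W : Fin N → Bool → Ω → Fin m → ℝ) (s : ℝ) (b : Bool) (k : ℕ) (ω : Ω) :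
    NoiseSpace m :=
  if h : k.div2 < N then milsteinNoise (s⁻¹ • W ⟨k.div2, h⟩ (b ^^ k.bodd) ω) else 0

theorem pairNoise_two_mul (n : Fin N) (ω : Ω) :
    pairNoise W s b (2 * n) ω = milsteinNoise (s⁻¹ • W n b ω) := by
  simp [pairNoise, Nat.div2_val]

theorem pairNoise_two_mul_add_one (n : Fin N) (ω : Ω) :
    pairNoise W s b (2 * n + 1) ω = milsteinNoise (s⁻¹ • W n (!b) ω) := by
  simp [pairNoise, Nat.div2_val]

theorem pairNoise_add_pairNoise (b c : Bool) (n : ℕ) (ω : Ω) :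
    pairNoise W s b (2 * n) ω + pairNoise W s b (2 * n + 1) ω
      = pairNoise W s c (2 * n) ω + pairNoise W s c (2 * n + 1) ω := by
  by_cases hn : n < N
  · have heven (b : Bool) := pairNoise_two_mul (W := W) (s := s) (b := b) ⟨n, hn⟩ ω
    have hodd (b : Bool) := pairNoise_two_mul_add_one (W := W) (s := s) (b := b) ⟨n, hn⟩ ω
    simp only at heven hodd
    rw [heven, hodd, heven, hodd]
    cases b <;> cases c <;> simp [add_comm]
  · simp [pairNoise, Nat.div2_val, hn]

theorem measurable_iSup_pairTime (n : Fin N) (c : Bool) {k : ℕ}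
    (hk : 2 * n + (b ^^ c).toNat = k) :
    Measurable[⨆ q ∈ {q | pairTime b q = k}, MeasurableSpace.comap
      (fun ω => W q.1 q.2.1 ω q.2.2) inferInstance] (fun ω => s⁻¹ • W n c ω) :=
  @measurable_pi_lambda Ω (Fin m) _ (_) _ _ fun j => (measurable_const_mul s⁻¹).comp
    ((comap_measurable fun ω => W n c ω j).mono (le_biSup (fun q : Fin N × Bool × Fin m =>
      MeasurableSpace.comap (fun ω => W q.1 q.2.1 ω q.2.2) inferInstance)
      (show (n, c, j) ∈ {q | pairTime b q = k} from hk)) le_rfl)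

namespace IsBrownianIncrements

/-- The information carried by the increments used before each step. -/
def pairFiltration (hW : IsBrownianIncrements W s μ) (b : Bool) : Filtration ℕ mΩ :=
  revealFiltration (pairTime b) fun q : Fin N × Bool × Fin m =>
    (hW.measurable q.1 q.2.1 q.2.2).comap_le

theorem pairFiltration_two_mul_eq (hW : IsBrownianIncrements W s μ) (b c : Bool) (n : ℕ) :
    hW.pairFiltration b (2 * n) = hW.pairFiltration c (2 * n) :=
  revealFiltration_congr _ fun q => by
    have hb := Bool.toNat_le (b ^^ q.2.1)
    have hc := Bool.toNat_le (c ^^ q.2.1)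
    simp only [pairTime]
    omega

theorem measurePreserving_inv_smul (hW : IsBrownianIncrements W s μ) (hs : s ≠ 0) (n : Fin N)
    (c : Bool) : MeasurePreserving (fun ω => s⁻¹ • W n c ω) μ (gaussianPi m) := by
  have hmeas (j : Fin m) := (hW.measurable n c j).const_mul s⁻¹
  have hlaw (j : Fin m) : HasLaw (fun ω => s⁻¹ * W n c ω j) (gaussianReal 0 1) μ := by
    have h := gaussianReal_const_mul ⟨(hW.measurable n c j).aemeasurable, hW.map_eq n c j⟩ s⁻¹
    have hvar : NNReal.mk (s⁻¹ ^ 2) (sq_nonneg _) * (s ^ 2).toNNReal = 1 := by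
      ext
      simp [Real.coe_toNNReal _ (sq_nonneg s), hs]
    rwa [mul_zero, hvar] at h
  have hind : _root_.ProbabilityTheory.iIndepFun (fun j ω => s⁻¹ * W n c ω j) μ :=
    (hW.iIndepFun.precomp (g := fun j : Fin m => (n, c, j)) fun _ _ h => by simpa using h).comp
      (fun _ x => s⁻¹ * x) fun _ => measurable_const_mul s⁻¹
  exact ⟨measurable_pi_lambda _ hmeas, (hind.hasLaw_pi hlaw).map_eq⟩

theorem isDrivingNoise_pairNoise [IsProbabilityMeasure μ] (hW : IsBrownianIncrements W s μ)
    (hs : s ≠ 0) (b : Bool) (q : ℕ) :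
    IsDrivingNoise (pairNoise W s b) q (lpNorm milsteinNoise q (gaussianPi m))
      (hW.pairFiltration b) μ := by
  suffices h : ∀ k, IsInnovation (pairNoise W s b k) q (hW.pairFiltration b k) μ
      ∧ StronglyMeasurable[hW.pairFiltration b (k + 1)] (pairNoise W s b k)
      ∧ lpNorm (pairNoise W s b k) q μ ≤ lpNorm milsteinNoise q (gaussianPi m) from
    ⟨fun k => (h k).1, fun k => (h k).2.1, fun k => (h k).2.2⟩
  intro k
  by_cases hk : k.div2 < N
  · have heq : pairNoise W s b k
        = fun ω => milsteinNoise (s⁻¹ • W ⟨k.div2, hk⟩ (b ^^ k.bodd) ω) :=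
      funext fun ω => dif_pos hk
    have hlaw := hW.measurePreserving_inv_smul hs ⟨k.div2, hk⟩ (b ^^ k.bodd)
    have htime : 2 * k.div2 + (b ^^ (b ^^ k.bodd)).toNat = k := by
      rw [← Bool.xor_assoc, Bool.xor_self, Bool.false_xor, add_comm]
      exact k.bodd_add_div2
    have hmeas := measurable_iSup_pairTime (W := W) (s := s) ⟨k.div2, hk⟩ (b ^^ k.bodd) htime
    rw [heq]
    exact ⟨isInnovation_milsteinNoise hlaw (indep_of_indep_of_le_left
        (indep_iSup_revealFiltration _ hW.iIndepFun k) hmeas.comap_le) q,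
      (measurable_milsteinNoise.comp (hmeas.mono (iSup_le_revealFiltration_succ _ k)
        le_rfl)).stronglyMeasurable,
      (lpNorm_comp_measurePreserving measurable_milsteinNoise.aestronglyMeasurable hlaw).le⟩
  · have heq : pairNoise W s b k = fun _ => 0 := funext fun ω => dif_neg hk
    rw [heq]
    refine ⟨⟨measurable_const, MemLp.zero', integral_zero _ _, ?_⟩, stronglyMeasurable_const, ?_⟩
    · rw [MeasurableSpace.comap_const]
      exact indep_bot_left _
    · rw [lpNorm_fun_zero]
      exact lpNorm_nonneg

theorem isAntitheticNoise [IsProbabilityMeasure μ] (hW : IsBrownianIncrements W s μ)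
    (hs : s ≠ 0) (q : ℕ) :
    IsAntitheticNoise (pairNoise W s false) (pairNoise W s true) q
      (lpNorm milsteinNoise q (gaussianPi m)) (hW.pairFiltration false)
      (hW.pairFiltration true) μ where
  left := hW.isDrivingNoise_pairNoise hs false q
  right := hW.isDrivingNoise_pairNoise hs true q
  filtration_eq := hW.pairFiltration_two_mul_eq true false
  add_eq := pairNoise_add_pairNoise true false

end IsBrownianIncrements

theorem eq_milsteinPath {f : (Fin d → ℝ) → Fin d → ℝ} {g : (Fin d → ℝ) → Fin d → Fin m → ℝ}
    {x₀ : Fin d → ℝ} {X : ℕ → Ω → Fin d → ℝ} (hs : s ≠ 0) (hX₀ : ∀ ω, X 0 ω = x₀)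
    (hX₁ : ∀ (n : Fin N) ω,
      X (2 * (n : ℕ) + 1) ω = milsteinStep f g (s ^ 2) (X (2 * (n : ℕ)) ω) (W n b ω))
    (hX₂ : ∀ (n : Fin N) ω,
      X (2 * (n : ℕ) + 2) ω = milsteinStep f g (s ^ 2) (X (2 * (n : ℕ) + 1) ω) (W n (!b) ω))
    {n : ℕ} (hn : n ≤ N) (ω : Ω) :
    X (2 * n) ω = milsteinPath f (fun x => diffusionCLM d m (g x))
      (fun x => correctionCLM d m (correctionTensor g x)) s x₀ (pairNoise W s b) (2 * n) ω := by
  have hstep (x : Fin d → ℝ) (w : Fin m → ℝ) := milsteinStep_sq_smul f g s x (s⁻¹ • w)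
  simp only [smul_inv_smul₀ hs] at hstep
  induction n with
  | zero => exact hX₀ ω
  | succ n ih =>
    have heven := pairNoise_two_mul (W := W) (s := s) (b := b) ⟨n, hn⟩ ω
    have hodd := pairNoise_two_mul_add_one (W := W) (s := s) (b := b) ⟨n, hn⟩ ω
    have hX₁ := hX₁ ⟨n, hn⟩ ω
    have hX₂ := hX₂ ⟨n, hn⟩ ω
    simp only at heven hodd hX₁ hX₂
    rw [Nat.mul_succ, hX₂, hX₁, ih (Nat.le_of_succ_le hn), hstep, hstep, milsteinPath, milsteinPath,
      heven, hodd]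

end BrownianIncrements

section Moments

variable {Ω : Type*} {mΩ : MeasurableSpace Ω} {μ : Measure Ω} [IsProbabilityMeasure μ]

theorem integral_rpow_le_of_lpNorm_le {Y : Ω → ℝ} {p R : ℝ} {q : ENNReal} (hY : MemLp Y q μ)
    (hY0 : ∀ ω, 0 ≤ Y ω) (hp : 0 < p) (hpq : ENNReal.ofReal p ≤ q) (hR : lpNorm Y q μ ≤ R) :
    Integrable (fun ω => Y ω ^ p) μ ∧ ∫ ω, Y ω ^ p ∂μ ≤ R ^ p := by
  have hp' : ENNReal.ofReal p ≠ 0 := (ENNReal.ofReal_pos.2 hp).ne'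
  have hint := (hY.mono_exponent hpq).integrable_norm_rpow hp' ENNReal.ofReal_ne_top
  have hpow := lpNorm_eq_integral_norm_rpow_toReal hp' ENNReal.ofReal_ne_top hY.1
  simp only [Real.norm_of_nonneg (hY0 _), ENNReal.toReal_ofReal hp.le] at hint hpow
  have hle : lpNorm Y (ENNReal.ofReal p) μ ≤ lpNorm Y q μ := by
    rw [← toReal_eLpNorm hY.1, ← toReal_eLpNorm hY.1]
    exact ENNReal.toReal_mono hY.2.ne (eLpNorm_le_eLpNorm_of_exponent_le hpq hY.1)
  have h0 : 0 ≤ ∫ ω, Y ω ^ p ∂μ := integral_nonneg fun ω => Real.rpow_nonneg (hY0 ω) p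
  refine ⟨hint, (Real.rpow_inv_le_iff_of_pos h0 (lpNorm_nonneg.trans hR) hp).1 ?_⟩
  exact hpow.symm.trans_le (hle.trans hR)

theorem IsMilsteinCoeff.integral_sup'_norm_antitheticDiff_rpow_le {ι V : Type*} [Fintype ι]
    [NormedAddCommGroup V] [NormedSpace ℝ V] [MeasurableSpace V] [BorelSpace V]
    [SecondCountableTopology V] [CompleteSpace V] {f : (ι → ℝ) → ι → ℝ}
    {g H : (ι → ℝ) → V →L[ℝ] ι → ℝ} {L : NNReal} {ξ η : ℕ → Ω → V} {n N : ℕ}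
    {Z s S T p : ℝ} {𝓖 𝓗 : Filtration ℕ mΩ} {x₀ : ι → ℝ} (hc : IsMilsteinCoeff f g H L)
    (hξη : IsAntitheticNoise ξ η (n + 2) Z 𝓖 𝓗 μ) (hn : Even (n + 2)) (hs : 0 ≤ s) (hsS : s ≤ S)
    (hNT : 2 * N * s ^ 2 ≤ T) (hp : 0 < p) (hpn : p ≤ (n + 2 : ℕ)) :
    ∫ ω, (Finset.range (N + 1)).sup' Finset.nonempty_range_add_one
        (fun k => ‖antitheticDiff f g H s x₀ ξ η k ω‖ ^ p) ∂μ
      ≤ (antitheticConst (Fintype.card ι) n L S Z T ‖x₀‖ * s) ^ p := by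
  set M := partialSups (fun k ω => ‖antitheticDiff f g H s x₀ ξ η k ω‖) N
  have hnorm (ω : Ω) (k : ℕ) (hk : k ∈ Finset.range (N + 1)) :
      ‖antitheticDiff f g H s x₀ ξ η k ω‖ ≤ M ω :=
    le_partialSups_of_le (fun k ω => ‖antitheticDiff f g H s x₀ ξ η k ω‖)
      (Finset.mem_range_succ_iff.1 hk) ω
  have hzero : 0 ∈ Finset.range (N + 1) := Finset.mem_range.2 N.succ_pos
  have hM : MemLp M (n + 2 : ℕ) μ := memLp_partialSups (fun k =>
    ((hc.memLp_milsteinPath hξη.left (by omega) hs _).sub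
      (hc.memLp_milsteinPath hξη.right (by omega) hs _)).norm) N
  have hmom := integral_rpow_le_of_lpNorm_le hM
    (fun ω => (norm_nonneg _).trans (hnorm ω 0 hzero)) hp
    (ENNReal.ofReal_le_of_le_toReal (by rwa [ENNReal.toReal_natCast]))
    (hc.lpNorm_partialSups_antitheticDiff_le hξη hn hs hsS hNT)
  refine le_trans (integral_mono_of_nonneg (.of_forall fun ω => ?_) hmom.1
    (.of_forall fun ω => Finset.sup'_le _ _ fun k hk => ?_)) hmom.2
  · exact (Real.rpow_nonneg (norm_nonneg _) p).trans
      (Finset.le_sup' (fun k => ‖antitheticDiff f g H s x₀ ξ η k ω‖ ^ p) hzero)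
  · exact Real.rpow_le_rpow (norm_nonneg _) (hnorm ω k hk) hp.le

end Moments

end AntitheticMilstein

open AntitheticMilstein in
theorem antithetic_milstein_fine_antithetic_difference_general.{u}
    {d m : ℕ} {T : ℝ} (hT : 0 < T) {f : (Fin d → ℝ) → Fin d → ℝ}
    {g : (Fin d → ℝ) → Fin d → Fin m → ℝ} {Kf Kg : NNReal}
    (hf : LipschitzWith Kf f) (hg : LipschitzWith Kg g) (_hg' : Differentiable ℝ g)
    (x₀ : Fin d → ℝ) {p : ℝ} (hp : 0 < p) :
    ∃ K : ℝ, ∀ N : ℕ, 1 ≤ N →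
      ∀ (Ω : Type u) (_ : MeasurableSpace Ω) (μ : Measure Ω), IsProbabilityMeasure μ →
      ∀ (W : Fin N → Bool → Ω → Fin m → ℝ) (Xf Xa : ℕ → Ω → Fin d → ℝ),
        (∀ n b j, Measurable fun ω => W n b ω j) →
        (∀ n b j, μ.map (fun ω => W n b ω j) = gaussianReal 0 (Real.toNNReal (T / N / 2))) →
        iIndepFun
          (fun q : Fin N × Bool × Fin m => fun ω => W q.1 q.2.1 ω q.2.2) μ →
        (∀ ω, Xf 0 ω = x₀) → (∀ ω, Xa 0 ω = x₀) →
        (∀ (n : Fin N) ω, Xf (2 * (n : ℕ) + 1) ω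
            = milsteinStep f g (T / N / 2) (Xf (2 * (n : ℕ)) ω) (W n false ω)) →
        (∀ (n : Fin N) ω, Xf (2 * (n : ℕ) + 2) ω
            = milsteinStep f g (T / N / 2) (Xf (2 * (n : ℕ) + 1) ω) (W n true ω)) →
        (∀ (n : Fin N) ω, Xa (2 * (n : ℕ) + 1) ω
            = milsteinStep f g (T / N / 2) (Xa (2 * (n : ℕ)) ω) (W n true ω)) →
        (∀ (n : Fin N) ω, Xa (2 * (n : ℕ) + 2) ω
            = milsteinStep f g (T / N / 2) (Xa (2 * (n : ℕ) + 1) ω) (W n false ω)) →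
        (∫ ω, (Finset.range (N + 1)).sup'
            (Finset.nonempty_range_iff.mpr (Nat.succ_ne_zero N))
            (fun n => ‖Xf (2 * n) ω - Xa (2 * n) ω‖ ^ p) ∂μ)
          ≤ K * (T / N) ^ (p / 2) := by
  obtain ⟨L, hc⟩ := exists_isMilsteinCoeff hf hg
  obtain ⟨k, hk⟩ := exists_nat_ge p
  have hpk : p ≤ (2 * k + 2 : ℕ) := hk.trans (by push_cast; linarith)
  let Z := lpNorm milsteinNoise (2 * k + 2 : ℕ) (gaussianPi m)
  let C := antitheticConst (Fintype.card (Fin d)) (2 * k) L √T Z T ‖x₀‖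
  refine ⟨|C| ^ p, fun N hN Ω _ μ _ W Xf Xa hWm hW hWi hf₀ ha₀ hf₁ hf₂ ha₁ ha₂ => ?_⟩
  have hN' : (1 : ℝ) ≤ N := by exact_mod_cast hN
  set s := √(T / N / 2) with hs
  have hs0 : 0 < s := by positivity
  have hsT : T / N / 2 = s ^ 2 := (Real.sq_sqrt (by positivity)).symm
  rw [hsT] at hW hf₁ hf₂ ha₁ ha₂
  have hdiff {n : ℕ} (hn : n ∈ Finset.range (N + 1)) (ω : Ω) :=
    congrArg₂ (· - ·) (eq_milsteinPath hs0.ne' hf₀ hf₁ hf₂ (Finset.mem_range_succ_iff.1 hn) ω)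
      (eq_milsteinPath hs0.ne' ha₀ ha₁ ha₂ (Finset.mem_range_succ_iff.1 hn) ω)
  calc _ = _ := integral_congr_ae (.of_forall fun ω => Finset.sup'_congr _ rfl fun n hn =>
        congrArg (‖·‖ ^ p) (hdiff hn ω))
    _ ≤ (C * s) ^ p := hc.integral_sup'_norm_antitheticDiff_rpow_le
        (IsBrownianIncrements.isAntitheticNoise ⟨hWm, hW, hWi⟩ hs0.ne' (2 * k + 2)) ⟨k + 1, by ring⟩
        hs0.le (Real.sqrt_le_sqrt ((half_le_self (by positivity)).trans (div_le_self hT.le hN')))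
        (by rw [← hsT]; field_simp; rfl) hp hpk
    _ ≤ |C| ^ p * s ^ p := by
        rw [← Real.mul_rpow (abs_nonneg C) hs0.le, ← abs_of_pos hs0, ← abs_mul, abs_of_pos hs0]
        exact (le_abs_self _).trans (Real.abs_rpow_le_abs_rpow _ _)
    _ ≤ |C| ^ p * (T / N) ^ (p / 2) := by
        rw [hs, Real.sqrt_eq_rpow, ← Real.rpow_mul (by positivity), one_div_mul_eq_div]
        gcongr |C| ^ p * ?_ ^ (p / 2)
        exact half_le_self (by positivity)

/-- in the antithetic Milstein setting (fine path `Xf` on the fine grid of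
spacing `Δt/2`, with `Xf (2n)` the value at coarse time `n Δt`; antithetic path `Xa` with
the two half-step Brownian increments swapped in each coarse step), for every `p ≥ 2`
there is a constant `K_p`, depending only on `p, T, f, g`, with
`E[max_{0≤n≤N} ‖Xf_n − Xa_n‖^p] ≤ K_p Δt^{p/2}` for every `N ≥ 1`, `Δt = T/N`. -/
theorem antithetic_milstein_fine_antithetic_difference
    {d m : ℕ} (hd : 0 < d) (hm : 0 < m) (T : ℝ) (hT : 0 < T)
    (f : (Fin d → ℝ) → Fin d → ℝ) (g : (Fin d → ℝ) → Fin d → Fin m → ℝ)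
    (hf : ContDiff ℝ 2 f) (hg : ContDiff ℝ 2 g) (Cfg : ℝ)
    (hf1 : ∀ x, ‖fderiv ℝ f x‖ ≤ Cfg) (hf2 : ∀ x, ‖iteratedFDeriv ℝ 2 f x‖ ≤ Cfg)
    (hg1 : ∀ x, ‖fderiv ℝ g x‖ ≤ Cfg) (hg2 : ∀ x, ‖iteratedFDeriv ℝ 2 g x‖ ≤ Cfg)
    (x₀ : Fin d → ℝ) (p : ℝ) (hp : 2 ≤ p) :
    ∃ K : ℝ, ∀ N : ℕ, 1 ≤ N →
      ∀ (Ω : Type) (_ : MeasurableSpace Ω) (μ : Measure Ω), IsProbabilityMeasure μ →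
      ∀ (W : Fin N → Bool → Ω → Fin m → ℝ) (Xf Xa Xc : ℕ → Ω → Fin d → ℝ),
        (∀ n b j, Measurable fun ω => W n b ω j) →
        (∀ n b j, μ.map (fun ω => W n b ω j) = gaussianReal 0 (Real.toNNReal (T / N / 2))) →
        iIndepFun
          (fun q : Fin N × Bool × Fin m => fun ω => W q.1 q.2.1 ω q.2.2) μ →
        (∀ ω, Xf 0 ω = x₀) → (∀ ω, Xa 0 ω = x₀) → (∀ ω, Xc 0 ω = x₀) →
        (∀ (n : Fin N) ω, Xf (2 * (n : ℕ) + 1) ω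
            = milsteinStep f g (T / N / 2) (Xf (2 * (n : ℕ)) ω) (W n false ω)) →
        (∀ (n : Fin N) ω, Xf (2 * (n : ℕ) + 2) ω
            = milsteinStep f g (T / N / 2) (Xf (2 * (n : ℕ) + 1) ω) (W n true ω)) →
        (∀ (n : Fin N) ω, Xa (2 * (n : ℕ) + 1) ω
            = milsteinStep f g (T / N / 2) (Xa (2 * (n : ℕ)) ω) (W n true ω)) →
        (∀ (n : Fin N) ω, Xa (2 * (n : ℕ) + 2) ω
            = milsteinStep f g (T / N / 2) (Xa (2 * (n : ℕ) + 1) ω) (W n false ω)) →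
        (∀ (n : Fin N) ω, Xc ((n : ℕ) + 1) ω
            = milsteinStep f g (T / N) (Xc (n : ℕ) ω) (W n false ω + W n true ω)) →
        (∫ ω, (Finset.range (N + 1)).sup'
            (Finset.nonempty_range_iff.mpr (Nat.succ_ne_zero N))
            (fun n => ‖Xf (2 * n) ω - Xa (2 * n) ω‖ ^ p) ∂μ)
          ≤ K * (T / N) ^ (p / 2) := by
  have lip {E F : Type} [NormedAddCommGroup E] [NormedSpace ℝ E] [NormedAddCommGroup F]
      [NormedSpace ℝ F] {φ : E → F} (hφ : ContDiff ℝ 2 φ) (hφ1 : ∀ x, ‖fderiv ℝ φ x‖ ≤ Cfg) :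
      LipschitzWith Cfg.toNNReal φ :=
    lipschitzWith_of_nnnorm_fderiv_le (hφ.differentiable two_ne_zero)
      fun x => NNReal.le_toNNReal_of_coe_le (hφ1 x)
  obtain ⟨K, hK⟩ := antithetic_milstein_fine_antithetic_difference_general hT (lip hf hf1)
    (lip hg hg1) (hg.differentiable two_ne_zero) x₀ (two_pos.trans_le hp)
  exact ⟨K, fun N hN Ω _ μ hμ W Xf Xa _ hWm hW hWi hf₀ ha₀ _ hf₁ hf₂ ha₁ ha₂ _ =>
    hK N hN Ω _ μ hμ W Xf Xa hWm hW hWi hf₀ ha₀ hf₁ hf₂ ha₁ ha₂⟩
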